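/- arXiv:2008.07236 — 2 statements merged into one kernel-verified Lean document; each statement's English description precedes it below -/
import Mathlib

section
/- Let 0 < R < 1. Let (C_n) be a sequence of doubly transitive binary linear codes, where C_n has length n (n ranging over an infinite set of positive integers), such that the rates R(C_n) converge to R. Then for every ε > 0 there exists N such that for all n ≥ N and all 0 ≤ i ≤ n, the weight distribution of C_n satisfies a_i ≤ 2^{εn} · (1/(1-R))^{2·ln 2·min(i, n-i)}. -/
/-!
Let `k(S)` be the dimension of the subcode of `C` supported in a set `S` of coordinates, and let
`E_p` be the expectation over random sets `S` of density `p`.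

* Since `2 ^ k(S)` counts the codewords supported in `S`, the weight enumerator is
  `∑_{c ∈ C} θ ^ |c| = E_θ 2 ^ k(S)`. The increments of `k` lie in `{0, 1}`, and a tensorizing
  reverse Jensen inequality gives `E_θ 2 ^ k ≤ 2 ^ (E_l k)` where `1 + θ = 2 ^ l`
  (`ex_two_rpow_le`). Hence `a_i ≤ 2 ^ (E_l k) * θ ^ (-i)`.

* The function `p ↦ E_p k` increases from `0` to `dim C`, with derivative `n * h(p)` where `h(p)` is
  the probability that a fixed coordinate raises the dimension; `h` does not depend on the
  coordinate by transitivity. The underlying event is monotone and, by double transitivity, has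
  equal influences. A Talagrand-type inequality (`variance_log_le`), obtained from a logarithmic
  Sobolev inequality applied to martingale differences, shows that `h` has a sharp threshold. As the
  integral of `h` is the rate, the threshold is near `1 - R`, so `E_l k = o(n)` for fixed `l < 1 - R`
  (`ex_kdim_small`).

* The inequality `l ^ (2 log 2) ≤ 2 ^ l - 1 = θ` on `(0, 1]` turns this into the stated bound with
  exponent `i`. Adjoining the all-ones word keeps double transitivity, changes the rate by at most
  `1 / n`, and makes the weight distribution symmetric, which gives the exponent `n - i` too.
-/

open Finset Filter

/-- The rate of a binary linear code. -/
noncomputable def codeRate {ι : Type} [Fintype ι] (C : Submodule (ZMod 2) (ι → ZMod 2)) : ℝ :=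
  (Module.finrank (ZMod 2) C : ℝ) / (Fintype.card ι : ℝ)

/-- `weightEnum C i` is the number of codewords of Hamming weight `i`. -/
noncomputable def weightEnum {ι : Type} [Fintype ι] (C : Submodule (ZMod 2) (ι → ZMod 2))
    (i : ℕ) : ℕ :=
  Nat.card {x : ι → ZMod 2 // x ∈ C ∧ hammingNorm x = i}

/-- The permutation `π` of coordinates maps the code `C` onto itself. -/
def PreservesCode {ι : Type} [Fintype ι] (C : Submodule (ZMod 2) (ι → ZMod 2))
    (π : Equiv.Perm ι) : Prop :=
  ∀ x : ι → ZMod 2, x ∈ C ↔ x ∘ π ∈ C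

/-- The automorphism group of `C` acts 2-transitively on coordinates. -/
def DoublyTransitive {ι : Type} [Fintype ι] (C : Submodule (ZMod 2) (ι → ZMod 2)) : Prop :=
  ∀ i₁ j₁ i₂ j₂ : ι, i₁ ≠ j₁ → i₂ ≠ j₂ →
    ∃ π : Equiv.Perm ι, PreservesCode C π ∧ π i₁ = i₂ ∧ π j₁ = j₂

/-- Minimal distance: the least Hamming weight of a nonzero codeword. -/
noncomputable def minDist {ι : Type} [Fintype ι] (C : Submodule (ZMod 2) (ι → ZMod 2)) : ℕ :=
  sInf {d | ∃ x ∈ C, x ≠ 0 ∧ hammingNorm x = d}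

/-- Reed-Muller code RM(m,d). -/
noncomputable def ReedMuller (m d : ℕ) : Submodule (ZMod 2) ((Fin m → ZMod 2) → ZMod 2) :=
  Submodule.map
    (LinearMap.pi fun v : Fin m → ZMod 2 => (MvPolynomial.aeval v).toLinearMap)
    (MvPolynomial.restrictTotalDegree (Fin m) (ZMod 2) d)

open scoped Classical in
/-- ML block error probability on BSC(p). -/
noncomputable def Perr {ι : Type} [Fintype ι] (C : Submodule (ZMod 2) (ι → ZMod 2)) (p : ℝ) : ℝ :=
  ∑ z : ι → ZMod 2,
    if ∃ x ∈ C, x ≠ 0 ∧ hammingNorm (z + x) ≤ hammingNorm z then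
      p ^ hammingNorm z * (1 - p) ^ (Fintype.card ι - hammingNorm z) else 0

/-- Rank of the projection of `C` to the coordinates in `S`. -/
noncomputable def rankC {ι : Type} [Fintype ι] (C : Submodule (ZMod 2) (ι → ZMod 2))
    (S : Finset ι) : ℕ :=
  Module.finrank (ZMod 2)
    (C.map (LinearMap.funLeft (ZMod 2) (ZMod 2) (Subtype.val : {i // i ∈ S} → ι)))

/-- `f_C(S) = |S| - r_C(S)`. -/
noncomputable def fC {ι : Type} [Fintype ι] (C : Submodule (ZMod 2) (ι → ZMod 2))
    (S : Finset ι) : ℝ :=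
  (S.card : ℝ) - (rankC C S : ℝ)

/-- `μ_C(λ) = E_{S ~ λ} f_C(S)`. -/
noncomputable def muC {ι : Type} [Fintype ι] (C : Submodule (ZMod 2) (ι → ZMod 2)) (l : ℝ) : ℝ :=
  ∑ S : Finset ι, l ^ S.card * (1 - l) ^ (Fintype.card ι - S.card) * fC C S

/-- Bit erasure probability `P_{b,i}(p)`. -/
noncomputable def Pbi {ι : Type} [Fintype ι] [DecidableEq ι]
    (C : Submodule (ZMod 2) (ι → ZMod 2)) (i : ι) (p : ℝ) : ℝ :=
  ∑ R ∈ ((Finset.univ : Finset ι).erase i).powerset,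
    (1 - p) ^ R.card * p ^ (Fintype.card ι - R.card) *
      (if rankC C R < rankC C (insert i R) then (1 : ℝ) else 0)

/-- The average EXIT function `h(p)`. -/
noncomputable def exitAvg {ι : Type} [Fintype ι] [DecidableEq ι]
    (C : Submodule (ZMod 2) (ι → ZMod 2)) (p : ℝ) : ℝ :=
  (1 / (Fintype.card ι : ℝ)) * ∑ i : ι, Pbi C i p / p

/-- The dual code. -/
def dualCode {ι : Type} [Fintype ι] (C : Submodule (ZMod 2) (ι → ZMod 2)) :
    Submodule (ZMod 2) (ι → ZMod 2) where
  carrier := {y | ∀ x ∈ C, ∑ i, x i * y i = 0}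
  zero_mem' := by intro x hx; simp
  add_mem' := by
    intro y z hy hz x hx
    simp only [Pi.add_apply, mul_add, Finset.sum_add_distrib, Set.mem_setOf_eq] at *
    rw [hy x hx, hz x hx, add_zero]
  smul_mem' := by
    intro c y hy x hx
    simp only [Pi.smul_apply, smul_eq_mul]
    rw [show (∑ i, x i * (c * y i)) = c * ∑ i, x i * y i by rw [Finset.mul_sum]; congr 1; funext i; ring, hy x hx, mul_zero]

namespace BiasedCube

/-! ### The biased cube -/

/-- The `p`-biased product weight of a point `x` of the cube, identified with the set
`{i | x i = true}`: every coordinate is `true` independently with probability `p`. -/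
noncomputable def wt {n : ℕ} (p : ℝ) (x : Fin n → Bool) : ℝ :=
  ∏ i, if x i then p else 1 - p

/-- Expectation of `F` under the `p`-biased product measure on the cube. -/
noncomputable def ex {n : ℕ} (p : ℝ) (F : (Fin n → Bool) → ℝ) : ℝ :=
  ∑ x, wt p x * F x

/-- Discrete derivative of `F` in direction `j`; it does not depend on `x j`. -/
def disc {n : ℕ} (j : Fin n) (F : (Fin n → Bool) → ℝ) (x : Fin n → Bool) : ℝ :=
  F (Function.update x j true) - F (Function.update x j false)

lemma ex_zero (p : ℝ) (F : (Fin 0 → Bool) → ℝ) : ex p F = F Fin.elim0 := by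
  simp only [ex, wt, Finset.univ_unique, Finset.sum_singleton, Finset.univ_eq_empty,
    Finset.prod_empty, one_mul]
  exact congrArg F (Subsingleton.elim _ _)

/-- Conditioning on the first coordinate; all inductions on the dimension go through this. -/
lemma ex_succ {n : ℕ} (p : ℝ) (F : (Fin (n + 1) → Bool) → ℝ) :
    ex p F = (1 - p) * ex p (fun x : Fin n → Bool => F (Fin.cons false x)) +
      p * ex p (fun x : Fin n → Bool => F (Fin.cons true x)) := by
  unfold ex
  rw [← (Fin.consEquiv (fun _ : Fin (n + 1) => Bool)).sum_comp, Fintype.sum_prod_type]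
  simp [wt, Fin.consEquiv, Fin.prod_univ_succ, Finset.mul_sum, mul_assoc, add_comm]

lemma disc_zero_cons {n : ℕ} (F : (Fin (n + 1) → Bool) → ℝ) (b : Bool) (x : Fin n → Bool) :
    disc 0 F (Fin.cons b x : Fin (n + 1) → Bool) = F (Fin.cons true x) - F (Fin.cons false x) := by
  simp [disc, Fin.update_cons_zero]

lemma disc_succ_cons {n : ℕ} (F : (Fin (n + 1) → Bool) → ℝ) (j : Fin n) (b : Bool)
    (x : Fin n → Bool) :
    disc j.succ F (Fin.cons b x : Fin (n + 1) → Bool) =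
      disc j (fun y : Fin n → Bool => F (Fin.cons b y)) x := by
  simp [disc, Fin.cons_update]

lemma wt_nonneg {n : ℕ} {p : ℝ} (h0 : 0 ≤ p) (h1 : p ≤ 1) (x : Fin n → Bool) : 0 ≤ wt p x :=
  Finset.prod_nonneg fun i _ => by split_ifs <;> linarith

lemma ex_mono {n : ℕ} {p : ℝ} (h0 : 0 ≤ p) (h1 : p ≤ 1) {F G : (Fin n → Bool) → ℝ}
    (h : ∀ x, F x ≤ G x) : ex p F ≤ ex p G :=
  Finset.sum_le_sum fun x _ => mul_le_mul_of_nonneg_left (h x) (wt_nonneg h0 h1 x)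

lemma ex_add {n : ℕ} (p : ℝ) (F G : (Fin n → Bool) → ℝ) :
    ex p (fun x => F x + G x) = ex p F + ex p G := by
  simp [ex, mul_add, Finset.sum_add_distrib]

lemma ex_sub {n : ℕ} (p : ℝ) (F G : (Fin n → Bool) → ℝ) :
    ex p (fun x => F x - G x) = ex p F - ex p G := by
  simp [ex, mul_sub, Finset.sum_sub_distrib]

lemma ex_smul {n : ℕ} (p c : ℝ) (F : (Fin n → Bool) → ℝ) :
    ex p (fun x => c * F x) = c * ex p F := by
  simp only [ex, Finset.mul_sum]
  exact Finset.sum_congr rfl fun x _ => by ring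

lemma ex_const {n : ℕ} (p c : ℝ) : ex p (fun _ : Fin n → Bool => c) = c := by
  induction n with
  | zero => rw [ex_zero]
  | succ n ih => rw [ex_succ, ih]; ring

lemma ex_nonneg {n : ℕ} {p : ℝ} (h0 : 0 ≤ p) (h1 : p ≤ 1) {F : (Fin n → Bool) → ℝ}
    (h : ∀ x, 0 ≤ F x) : 0 ≤ ex p F :=
  Finset.sum_nonneg fun x _ => mul_nonneg (wt_nonneg h0 h1 x) (h x)

lemma ex_perm {n : ℕ} (p : ℝ) (π : Equiv.Perm (Fin n)) (F : (Fin n → Bool) → ℝ) :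
    ex p (fun x => F (x ∘ π)) = ex p F := by
  unfold ex
  rw [← (Equiv.arrowCongr π.symm (Equiv.refl Bool)).sum_comp (fun x => wt p x * F x)]
  refine Finset.sum_congr rfl fun x _ => ?_
  have h1 : (Equiv.arrowCongr π.symm (Equiv.refl Bool)) x = x ∘ π := by
    funext i; simp
  rw [h1]
  congr 1
  unfold wt
  exact (Equiv.prod_comp π (fun i => if x i then p else 1 - p)).symm

lemma disc_perm {n : ℕ} (π : Equiv.Perm (Fin n)) (i : Fin n) (F : (Fin n → Bool) → ℝ)
    (x : Fin n → Bool) :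
    disc i F (x ∘ π) = disc (π i) (fun y => F (y ∘ π)) x := by
  have h : ∀ b, Function.update (x ∘ π) i b = Function.update x (π i) b ∘ π := by
    intro b; funext j
    by_cases hj : j = i
    · subst hj; simp
    · simp [Function.update_of_ne hj, Function.update_of_ne (π.injective.ne hj)]
  simp [disc, h]

/-- Russo's formula. -/
lemma hasDerivAt_ex {n : ℕ} (F : (Fin n → Bool) → ℝ) (p : ℝ) :
    HasDerivAt (fun p => ex p F) (∑ j, ex p (disc j F)) p := by
  induction n with
  | zero =>
    simp only [ex_zero, Finset.univ_eq_empty, Finset.sum_empty]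
    exact hasDerivAt_const _ _
  | succ n ih =>
    have h0 := ih (fun x : Fin n → Bool => F (Fin.cons false x))
    have h1 := ih (fun x : Fin n → Bool => F (Fin.cons true x))
    have h := (((hasDerivAt_id p).const_sub 1).mul h0).add ((hasDerivAt_id p).mul h1)
    have e : (fun p => ex p F) = (fun p => (1 - p) * ex p (fun x : Fin n → Bool => F (Fin.cons false x)) +
      p * ex p (fun x : Fin n → Bool => F (Fin.cons true x))) := by
      funext p; exact ex_succ p F
    rw [e]
    refine h.congr_deriv ?_
    rw [Fin.sum_univ_succ]
    simp only [ex_succ p (disc _ F), disc_zero_cons, disc_succ_cons, ex_sub,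
      Finset.sum_add_distrib, ← Finset.mul_sum, id]
    ring

/-! ### A reverse Jensen inequality -/

/-- For `F` with increments in `[0, 1]`, Jensen's inequality for `2 ^ F` can be reversed at the price
of raising the bias from `θ` to `l = log₂ (1 + θ)`. In one dimension this says
`(1 - θ) + θ * 2 ^ d ≤ (1 + θ) ^ d` for `d ∈ [0, 1]`, which is concavity of `t ↦ t ^ d` between
`1` and `2`; the one-dimensional inequality tensorizes. -/
lemma ex_two_rpow_le {n : ℕ} {θ l : ℝ} (h0 : 0 ≤ θ) (h1 : θ ≤ 1) (hl0 : 0 ≤ l) (hl1 : l ≤ 1)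
    (hl : (2 : ℝ) ^ l = 1 + θ)
    (F : (Fin n → Bool) → ℝ) (hF : ∀ j x, disc j F x ∈ Set.Icc (0 : ℝ) 1) :
    ex θ (fun x => (2 : ℝ) ^ F x) ≤ (2 : ℝ) ^ ex l F := by
  induction n with
  | zero => simp [ex_zero]
  | succ n ih =>
    have hh : ∀ b, ex θ (fun x : Fin n → Bool => (2 : ℝ) ^ F (Fin.cons b x)) ≤
        (2 : ℝ) ^ ex l (fun x : Fin n → Bool => F (Fin.cons b x)) := by
      intro b
      refine ih (fun x : Fin n → Bool => F (Fin.cons b x)) fun j x => ?_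
      rw [← disc_succ_cons]; exact hF _ _
    rw [ex_succ, ex_succ]
    set a := ex l (fun x : Fin n → Bool => F (Fin.cons false x)) with ha
    set b := ex l (fun x : Fin n → Bool => F (Fin.cons true x)) with hb
    have hd : b - a = ex l (fun x : Fin n → Bool => F (Fin.cons true x) - F (Fin.cons false x)) := by
      rw [ex_sub]
    have hd' : ∀ x : Fin n → Bool, F (Fin.cons true x) - F (Fin.cons false x) ∈ Set.Icc (0 : ℝ) 1 := by
      intro x
      rw [← disc_zero_cons F true x]; exact hF _ _
    have hd0 : 0 ≤ b - a := by rw [hd]; exact ex_nonneg hl0 hl1 fun x => (hd' x).1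
    have hd1 : b - a ≤ 1 := by
      rw [hd, ← ex_const (n := n) l 1]; exact ex_mono hl0 hl1 fun x => (hd' x).2
    have hc := (Real.concaveOn_rpow hd0 hd1).2 (show (1 : ℝ) ∈ Set.Ici 0 by simp)
      (show (2 : ℝ) ∈ Set.Ici 0 by simp) (show 0 ≤ 1 - θ by linarith) h0 (by ring)
    simp only [smul_eq_mul, Real.one_rpow] at hc
    have e1 : (1 - θ) * 1 + θ * 2 = (2 : ℝ) ^ l := by rw [hl]; ring
    rw [e1, ← Real.rpow_mul (by norm_num)] at hc
    calc _ ≤ (1 - θ) * (2 : ℝ) ^ a + θ * (2 : ℝ) ^ b :=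
          add_le_add (mul_le_mul_of_nonneg_left (hh false) (by linarith))
            (mul_le_mul_of_nonneg_left (hh true) h0)
      _ = (2 : ℝ) ^ a * ((1 - θ) * 1 + θ * (2 : ℝ) ^ (b - a)) := by
          rw [Real.rpow_sub (by norm_num)]
          have : (2 : ℝ) ^ a ≠ 0 := by positivity
          field_simp
      _ ≤ (2 : ℝ) ^ a * (2 : ℝ) ^ (l * (b - a)) := by gcongr
      _ = _ := by rw [← Real.rpow_add (by norm_num)]; congr 1; ring

/-! ### Logarithmic Sobolev inequality and influences -/

/-- Logarithmic Sobolev inequality for one biased bit, with a constant independent of `p`. With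
`m` the mean of the square, `log t ≤ t - 1` bounds the entropy by
`p (1 - p) (a + b)² (b - a)² / m`, and `p (1 - p) (a + b)² ≤ 2 m`. -/
lemma two_point_logSobolev {p : ℝ} (h0 : 0 < p) (h1 : p < 1) (a b : ℝ) :
    (1 - p) * (a ^ 2 * Real.log (a ^ 2)) + p * (b ^ 2 * Real.log (b ^ 2)) -
      ((1 - p) * a ^ 2 + p * b ^ 2) * Real.log ((1 - p) * a ^ 2 + p * b ^ 2) ≤ 2 * (b - a) ^ 2 := by
  have hq : 0 < 1 - p := by linarith
  set m := (1 - p) * a ^ 2 + p * b ^ 2 with hm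
  have hm0 : 0 ≤ m := by positivity
  rcases hm0.eq_or_lt with hm0 | hm0
  · have ha2 : a ^ 2 = 0 := by nlinarith [sq_nonneg a, sq_nonneg b, mul_nonneg h0.le (sq_nonneg b)]
    have hb2 : b ^ 2 = 0 := by nlinarith [sq_nonneg a, sq_nonneg b, mul_nonneg hq.le (sq_nonneg a)]
    rw [← hm0, ha2, hb2]; simp; positivity
  -- `x log (x / m) ≤ x (x / m - 1)`
  have key : ∀ x : ℝ, 0 ≤ x → x * Real.log x - x * Real.log m ≤ x * (x / m - 1) := by
    intro x hx
    rcases hx.eq_or_lt with hx | hx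
    · rw [← hx]; simp
    · rw [← mul_sub, ← Real.log_div hx.ne' hm0.ne']
      exact mul_le_mul_of_nonneg_left (Real.log_le_sub_one_of_pos (by positivity)) hx.le
  have ka := mul_le_mul_of_nonneg_left (key (a ^ 2) (sq_nonneg a)) hq.le
  have kb := mul_le_mul_of_nonneg_left (key (b ^ 2) (sq_nonneg b)) h0.le
  have e : (1 - p) * (a ^ 2 * (a ^ 2 / m - 1)) + p * (b ^ 2 * (b ^ 2 / m - 1)) =
      p * (1 - p) * (a + b) ^ 2 * (b - a) ^ 2 / m := by
    field_simp
    rw [hm]; ring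
  have hle : p * (1 - p) * (a + b) ^ 2 * (b - a) ^ 2 / m ≤ 2 * (b - a) ^ 2 := by
    rw [div_le_iff₀ hm0]
    have : p * (1 - p) * (a + b) ^ 2 ≤ 2 * m := by
      rw [hm]
      nlinarith [mul_nonneg (mul_nonneg h0.le hq.le) (sq_nonneg (a - b)), 
        mul_nonneg (mul_nonneg hq.le hq.le) (sq_nonneg a), mul_nonneg (mul_nonneg h0.le h0.le) (sq_nonneg b)]
    nlinarith [mul_le_mul_of_nonneg_right this (sq_nonneg (b - a))]
  have : m * Real.log m = (1 - p) * (a ^ 2 * Real.log m) + p * (b ^ 2 * Real.log m) := by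
    rw [hm]; ring
  linarith

lemma ex_mul_sq_le {n : ℕ} {p : ℝ} (h0 : 0 ≤ p) (h1 : p ≤ 1) (F G : (Fin n → Bool) → ℝ) :
    ex p (fun x => F x * G x) ^ 2 ≤ ex p (fun x => F x ^ 2) * ex p (fun x => G x ^ 2) := by
  unfold ex
  refine Finset.sum_sq_le_sum_mul_sum_of_sq_le_mul _ (fun x _ => ?_) (fun x _ => ?_) (fun x _ => ?_)
  · exact mul_nonneg (wt_nonneg h0 h1 x) (sq_nonneg _)
  · exact mul_nonneg (wt_nonneg h0 h1 x) (sq_nonneg _)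
  · exact le_of_eq (by ring)

/-- Logarithmic Sobolev inequality on the biased cube. In the inductive step the two-point
inequality is applied to the `L²` norms of the two restrictions of `g` to half-cubes, and the
reverse triangle inequality compares the difference of norms with the norm of the difference. -/
lemma logSobolev {n : ℕ} {p : ℝ} (h0 : 0 < p) (h1 : p < 1) (g : (Fin n → Bool) → ℝ) :
    ex p (fun x => g x ^ 2 * Real.log (g x ^ 2)) -
      ex p (fun x => g x ^ 2) * Real.log (ex p (fun x => g x ^ 2)) ≤
      2 * ∑ j, ex p (fun x => disc j g x ^ 2) := by
  induction n with
  | zero => simp [ex_zero]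
  | succ n ih =>
    have i0 := ih (fun x : Fin n → Bool => g (Fin.cons false x))
    have i1 := ih (fun x : Fin n → Bool => g (Fin.cons true x))
    rw [ex_succ, ex_succ p (fun x => g x ^ 2), Fin.sum_univ_succ]
    simp only [ex_succ p (fun x => disc _ g x ^ 2), disc_zero_cons, disc_succ_cons,
      Finset.sum_add_distrib, ← Finset.mul_sum]
    set A := ex p (fun x : Fin n → Bool => g (Fin.cons false x) ^ 2) with hA
    set B := ex p (fun x : Fin n → Bool => g (Fin.cons true x) ^ 2) with hB
    have hA0 : 0 ≤ A := ex_nonneg h0.le h1.le fun x => sq_nonneg _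
    have hB0 : 0 ≤ B := ex_nonneg h0.le h1.le fun x => sq_nonneg _
    have tp := two_point_logSobolev h0 h1 (√A) (√B)
    rw [Real.sq_sqrt hA0, Real.sq_sqrt hB0] at tp
    have cs := ex_mul_sq_le h0.le h1.le (fun x : Fin n → Bool => g (Fin.cons false x))
      (fun x : Fin n → Bool => g (Fin.cons true x))
    rw [← hA, ← hB] at cs
    have cs' : ex p (fun x : Fin n → Bool => g (Fin.cons false x) * g (Fin.cons true x)) ≤
        √A * √B := by
      rw [← Real.sqrt_mul hA0]; exact Real.le_sqrt_of_sq_le cs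
    have e : ex p (fun x : Fin n → Bool => (g (Fin.cons true x) - g (Fin.cons false x)) ^ 2) =
        A + B - 2 * ex p (fun x : Fin n → Bool => g (Fin.cons false x) * g (Fin.cons true x)) := by
      rw [hA, hB, ← ex_add, ← ex_smul, ← ex_sub]
      congr 1; funext x; ring
    have e2 : (√B - √A) ^ 2 = A + B - 2 * (√A * √B) := by
      nlinarith [Real.sq_sqrt hA0, Real.sq_sqrt hB0]
    rw [e]
    rw [e2] at tp
    have j0 := mul_le_mul_of_nonneg_left i0 (by linarith : 0 ≤ 1 - p)
    have j1 := mul_le_mul_of_nonneg_left i1 h0.le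
    nlinarith

/-- A function with small `L¹` norm has large energy relative to its `L²` norm: the entropy of `g²`
is at least `m log (m / δ²)`, where `m = E g²`. The bound is linearized in `m` through the free
parameter `t`. -/
lemma energy_lower {n : ℕ} {p δ t : ℝ} (h0 : 0 < p) (h1 : p < 1) (hδ : 0 < δ) (ht : 0 < t)
    (g : (Fin n → Bool) → ℝ) (hg : ex p (fun x => |g x|) ≤ δ) :
    ex p (fun x => g x ^ 2) * Real.log t - δ ^ 2 * t ≤
      2 * ∑ j, ex p (fun x => disc j g x ^ 2) := by
  set m := ex p (fun x => g x ^ 2) with hm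
  have hm0 : 0 ≤ m := ex_nonneg h0.le h1.le fun x => sq_nonneg _
  rcases hm0.eq_or_lt with hm0 | hm0
  · rw [← hm0]
    have : 0 ≤ ∑ j, ex p (fun x => disc j g x ^ 2) :=
      Finset.sum_nonneg fun j _ => ex_nonneg h0.le h1.le fun x => sq_nonneg _
    nlinarith [mul_pos (pow_pos hδ 2) ht]
  refine le_trans ?_ (logSobolev h0 h1 g)
  rw [← hm]
  have hc : 0 < m / δ := by positivity
  have pw : ∀ x, 2 * Real.log (m / δ) * g x ^ 2 - 2 * (m / δ * |g x| - g x ^ 2) ≤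
      g x ^ 2 * Real.log (g x ^ 2) := by
    intro x
    by_cases hx : g x = 0
    · simp [hx]
    have hx' : 0 < |g x| := abs_pos.mpr hx
    have l := Real.log_le_sub_one_of_pos (show 0 < m / δ / |g x| by positivity)
    rw [Real.log_div hc.ne' hx'.ne'] at l
    have l2 := mul_le_mul_of_nonneg_left l (sq_nonneg (g x))
    have e : g x ^ 2 * (m / δ / |g x| - 1) = m / δ * |g x| - g x ^ 2 := by
      rw [← sq_abs]; field_simp
    rw [e] at l2
    have : Real.log (g x ^ 2) = 2 * Real.log |g x| := by
      rw [← sq_abs, Real.log_pow]; norm_num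
    rw [this]
    linarith
  have E := ex_mono h0.le h1.le pw
  rw [ex_sub, ex_smul, ex_smul, ex_sub, ex_smul, ← hm] at E
  have h3 : m / δ * ex p (fun x => |g x|) ≤ m := by
    calc _ ≤ m / δ * δ := by gcongr
      _ = m := by field_simp
  have l3 := Real.log_le_sub_one_of_pos (show 0 < t * δ ^ 2 / m by positivity)
  rw [Real.log_div (by positivity) hm0.ne', Real.log_mul ht.ne' (by positivity), Real.log_pow] at l3
  rw [Real.log_div hm0.ne' hδ.ne'] at E
  have l4 := mul_le_mul_of_nonneg_left l3 hm0.le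
  have e4 : m * (t * δ ^ 2 / m - 1) = t * δ ^ 2 - m := by field_simp
  rw [e4] at l4
  push_cast at l4
  nlinarith

lemma abs_ex_le {p : ℝ} (h0 : 0 ≤ p) (h1 : p ≤ 1) (a b : ℝ) :
    |(1 - p) * a + p * b| ≤ (1 - p) * |a| + p * |b| := by
  refine (abs_add_le _ _).trans_eq ?_
  rw [abs_mul, abs_mul, abs_of_nonneg h0, abs_of_nonneg (by linarith : 0 ≤ 1 - p)]

/-- A Talagrand-type inequality: if all influences of `F` are at most `δ`, then its total influence
is large compared with its variance. The proof splits `F` orthogonally into its martingale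
differences, one coordinate at a time, and applies `energy_lower` to each of them. -/
theorem variance_log_le {n : ℕ} {p δ t : ℝ} (h0 : 0 < p) (h1 : p < 1) (hδ : 0 < δ) (ht : 0 < t)
    (F : (Fin n → Bool) → ℝ) (hF : ∀ j, ex p (fun x => |disc j F x|) ≤ δ) :
    (ex p (fun x => F x ^ 2) - ex p F ^ 2) * Real.log t - n * δ ^ 2 * t ≤
      2 * ∑ j, ex p (fun x => disc j F x ^ 2) := by
  induction n with
  | zero => simp [ex_zero]
  | succ n ih =>
    set G : (Fin n → Bool) → ℝ := fun x => (1 - p) * F (Fin.cons false x) + p * F (Fin.cons true x)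
      with hG
    set g : (Fin (n + 1) → Bool) → ℝ := fun x => F x - G (Fin.tail x) with hg
    have dG : ∀ j x, disc j G x = (1 - p) * disc j (fun y : Fin n → Bool => F (Fin.cons false y)) x +
        p * disc j (fun y : Fin n → Bool => F (Fin.cons true y)) x := by
      intro j x; simp only [disc, hG]; ring
    have dg0 : ∀ x, disc 0 g x = disc 0 F x := by
      intro x
      rw [← Fin.cons_self_tail x, disc_zero_cons, disc_zero_cons]
      simp [hg]
    have dgs : ∀ (j : Fin n) (b : Bool) x, disc j (fun y : Fin n → Bool => g (Fin.cons b y)) x =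
        disc j (fun y : Fin n → Bool => F (Fin.cons b y)) x - disc j G x := by
      intro j b x; simp [hg, disc]; ring
    have IH := ih G (fun j => by
      refine le_trans ?_ (hF j.succ)
      rw [ex_succ]
      simp only [disc_succ_cons]
      rw [← ex_smul, ← ex_smul, ← ex_add]
      refine ex_mono h0.le h1.le fun x => ?_
      rw [dG]; exact abs_ex_le h0.le h1.le _ _)
    have g1 : ex p (fun x => |g x|) ≤ δ := by
      refine le_trans ?_ (hF 0)
      rw [ex_succ, ex_succ]
      simp only [disc_zero_cons]
      rw [← ex_smul, ← ex_smul, ← ex_add, ← ex_smul, ← ex_smul, ← ex_add]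
      refine ex_mono h0.le h1.le fun x => ?_
      have e0 : g (Fin.cons false x) = -p * (F (Fin.cons true x) - F (Fin.cons false x)) := by
        simp [hg, hG]; ring
      have e1 : g (Fin.cons true x) = (1 - p) * (F (Fin.cons true x) - F (Fin.cons false x)) := by
        simp [hg, hG]; ring
      rw [e0, e1, abs_mul, abs_mul, abs_neg, abs_of_pos h0, abs_of_pos (by linarith : 0 < 1 - p)]
      nlinarith [abs_nonneg (F (Fin.cons true x) - F (Fin.cons false x)), 
        mul_nonneg (add_nonneg (sq_nonneg p) (sq_nonneg (1 - p)))
          (abs_nonneg (F (Fin.cons true x) - F (Fin.cons false x)))]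
    have EL := energy_lower h0 h1 hδ ht g g1
    have v1 : ex p (fun x => F x ^ 2) = ex p (fun x => G x ^ 2) + ex p (fun x => g x ^ 2) := by
      rw [ex_succ, ex_succ p (fun x => g x ^ 2)]
      rw [← ex_smul, ← ex_smul, ← ex_add, ← ex_smul, ← ex_smul, ← ex_add, ← ex_add]
      congr 1; funext x; simp [hg, hG]; ring
    have v2 : ex p F = ex p G := by
      rw [ex_succ, ← ex_smul, ← ex_smul, ← ex_add]
    have v3 : ∀ j : Fin n, ex p (fun x => disc j.succ F x ^ 2) =
        ex p (fun x => disc j G x ^ 2) + ex p (fun x => disc j.succ g x ^ 2) := by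
      intro j
      rw [ex_succ, ex_succ p (fun x => disc j.succ g x ^ 2)]
      rw [← ex_smul, ← ex_smul, ← ex_add, ← ex_smul, ← ex_smul, ← ex_add, ← ex_add]
      congr 1; funext x; simp only [disc_succ_cons, dgs, dG]; ring
    rw [Fin.sum_univ_succ] at EL ⊢
    simp only [dg0] at EL
    simp only [v3, Finset.sum_add_distrib]
    rw [v1, v2]
    push_cast
    linarith

/-! ### Shortened codes -/

variable {n : ℕ}

/-- The subcode of codewords supported in the set `{i | x i = true}`. -/
def shortened (C : Submodule (ZMod 2) (Fin n → ZMod 2)) (x : Fin n → Bool) :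
    Submodule (ZMod 2) (Fin n → ZMod 2) where
  carrier := {c | c ∈ C ∧ ∀ i, x i = false → c i = 0}
  zero_mem' := ⟨C.zero_mem, fun _ _ => rfl⟩
  add_mem' := fun ha hb => ⟨C.add_mem ha.1 hb.1, fun i hi => by
    simp [ha.2 i hi, hb.2 i hi]⟩
  smul_mem' := fun r a ha => ⟨C.smul_mem r ha.1, fun i hi => by simp [ha.2 i hi]⟩

lemma mem_shortened {C : Submodule (ZMod 2) (Fin n → ZMod 2)} {x : Fin n → Bool}
    {c : Fin n → ZMod 2} : c ∈ shortened C x ↔ c ∈ C ∧ ∀ i, x i = false → c i = 0 := Iff.rfl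

/-- Dimension of the shortened code, as a real-valued function on the cube. -/
noncomputable def kdim (C : Submodule (ZMod 2) (Fin n → ZMod 2)) (x : Fin n → Bool) : ℝ :=
  Module.finrank (ZMod 2) (shortened C x)

open scoped Classical in
/-- Allowing the coordinate `i` raises the dimension by one exactly if some newly allowed codeword
is nonzero at `i`: the smaller code is the kernel of evaluation at `i`. -/
lemma disc_kdim (C : Submodule (ZMod 2) (Fin n → ZMod 2)) (i : Fin n) (x : Fin n → Bool) :
    disc i (kdim C) x =
      if ∃ c ∈ shortened C (Function.update x i true), c i ≠ 0 then 1 else 0 := by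
  set T := shortened C (Function.update x i true) with hT
  set L : T →ₗ[ZMod 2] ZMod 2 := (LinearMap.proj i).comp T.subtype with hL
  have hker : (LinearMap.ker L).map T.subtype = shortened C (Function.update x i false) := by
    ext c
    simp only [Submodule.mem_map, LinearMap.mem_ker, hL, LinearMap.comp_apply,
      Submodule.subtype_apply, LinearMap.proj_apply, Subtype.exists, exists_and_right,
      exists_eq_right, hT, mem_shortened]
    constructor
    · rintro ⟨⟨hc, hs⟩, h0⟩
      refine ⟨hc, fun j hj => ?_⟩
      by_cases hji : j = i
      · rw [hji]; exact h0
      · exact hs j (by simpa [Function.update_of_ne hji] using hj)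
    · rintro ⟨hc, hs⟩
      refine ⟨⟨hc, fun j hj => ?_⟩, hs i (by simp)⟩
      by_cases hji : j = i
      · rw [hji] at hj; simp at hj
      · exact hs j (by simpa [Function.update_of_ne hji] using hj)
  have hk : Module.finrank (ZMod 2) (shortened C (Function.update x i false)) =
      Module.finrank (ZMod 2) (LinearMap.ker L) := by
    rw [← hker]
    exact (Submodule.equivMapOfInjective T.subtype T.subtype_injective _).finrank_eq.symm
  have hrn := LinearMap.finrank_range_add_finrank_ker L
  have hd : disc i (kdim C) x = (Module.finrank (ZMod 2) (LinearMap.range L) : ℝ) := by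
    simp only [disc, kdim]
    rw [hk, ← hT, ← hrn]; push_cast; ring
  rw [hd]
  split_ifs with h
  · obtain ⟨c, hc, hci⟩ := h
    have : LinearMap.range L = ⊤ := by
      refine LinearMap.range_eq_top.mpr (LinearMap.surjective ?_)
      intro h0
      exact hci (by simpa [hL] using LinearMap.congr_fun h0 ⟨c, hc⟩)
    rw [this]; simp
  · push Not at h
    have : L = 0 := by
      ext ⟨c, hc⟩; simpa [hL] using h c hc
    rw [this, LinearMap.range_zero, finrank_bot, Nat.cast_zero]

lemma disc_kdim_mem (C : Submodule (ZMod 2) (Fin n → ZMod 2)) (i : Fin n) (x : Fin n → Bool) :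
    disc i (kdim C) x = 0 ∨ disc i (kdim C) x = 1 := by
  classical
  rw [disc_kdim]; split_ifs
  · exact Or.inr rfl
  · exact Or.inl rfl

/-- The indicator `disc i (kdim C)` is monotone, so its derivatives are indicators too. -/
lemma disc_disc_kdim_mem (C : Submodule (ZMod 2) (Fin n → ZMod 2)) (i j : Fin n)
    (x : Fin n → Bool) :
    disc j (disc i (kdim C)) x = 0 ∨ disc j (disc i (kdim C)) x = 1 := by
  classical
  have hmono : (∃ c ∈ shortened C (Function.update (Function.update x j false) i true), c i ≠ 0) →
      ∃ c ∈ shortened C (Function.update (Function.update x j true) i true), c i ≠ 0 := by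
    rintro ⟨c, ⟨hc, hs⟩, hci⟩
    refine ⟨c, ⟨hc, fun l hl => hs l ?_⟩, hci⟩
    simp only [Function.update_apply] at hl ⊢
    split_ifs at hl ⊢ <;> simp_all
  unfold disc
  change disc i (kdim C) (Function.update x j true) - disc i (kdim C) (Function.update x j false) = 0 ∨
    disc i (kdim C) (Function.update x j true) - disc i (kdim C) (Function.update x j false) = 1
  rw [disc_kdim, disc_kdim]
  split_ifs with h1 h2 h2
  · simp
  · simp
  · exact absurd (hmono h2) h1
  · simp

lemma disc_disc_self (F : (Fin n → Bool) → ℝ) (i : Fin n) (x : Fin n → Bool) :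
    disc i (disc i F) x = 0 := by
  simp [disc]

lemma kdim_perm {C : Submodule (ZMod 2) (Fin n → ZMod 2)} {π : Equiv.Perm (Fin n)}
    (hπ : PreservesCode C π) (x : Fin n → Bool) : kdim C (x ∘ π) = kdim C x := by
  have h : shortened C (x ∘ π) =
      (shortened C x).map (LinearEquiv.funCongrLeft (ZMod 2) (ZMod 2) π).toLinearMap := by
    ext c
    simp only [Submodule.mem_map, mem_shortened]
    constructor
    · rintro ⟨hc, hs⟩
      have e : (c ∘ π.symm) ∘ π = c := by funext j; simp
      refine ⟨c ∘ π.symm, ⟨(hπ _).2 (by rwa [e]), fun i hi => ?_⟩, e⟩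
      exact hs _ (by simpa using hi)
    · rintro ⟨d, ⟨hd, hs⟩, rfl⟩
      exact ⟨(hπ d).1 hd, fun i hi => hs _ hi⟩
  unfold kdim
  rw [h]
  norm_cast
  exact LinearEquiv.finrank_map_eq _ _

lemma ex_disc_kdim_perm {C : Submodule (ZMod 2) (Fin n → ZMod 2)} {π : Equiv.Perm (Fin n)}
    (hπ : PreservesCode C π) (p : ℝ) (i : Fin n) :
    ex p (disc i (kdim C)) = ex p (disc (π i) (kdim C)) := by
  rw [← ex_perm p π]
  congr 1; funext x
  rw [disc_perm]; simp only [kdim_perm hπ]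

lemma ex_disc_disc_kdim_perm {C : Submodule (ZMod 2) (Fin n → ZMod 2)} {π : Equiv.Perm (Fin n)}
    (hπ : PreservesCode C π) (p : ℝ) (i j : Fin n) :
    ex p (disc j (disc i (kdim C))) = ex p (disc (π j) (disc (π i) (kdim C))) := by
  rw [← ex_perm p π]
  congr 1; funext x
  rw [disc_perm]; simp only [disc_perm, kdim_perm hπ]

lemma ex_at_zero (F : (Fin n → Bool) → ℝ) : ex 0 F = F (fun _ => false) := by
  induction n with
  | zero => rw [ex_zero]; exact congrArg F (Subsingleton.elim _ _)
  | succ n ih =>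
    rw [ex_succ, ih]
    simp only [sub_zero, one_mul, zero_mul, add_zero]
    congr 1; funext i
    refine Fin.cases ?_ (fun j => ?_) i <;> simp

lemma ex_zero_kdim (C : Submodule (ZMod 2) (Fin n → ZMod 2)) : ex 0 (kdim C) = 0 := by
  rw [ex_at_zero]
  have : shortened C (fun _ => false) = ⊥ := by
    rw [eq_bot_iff]
    intro c hc
    rw [Submodule.mem_bot]
    funext i; exact hc.2 i rfl
  unfold kdim
  rw [this]; simp

lemma kdim_le (C : Submodule (ZMod 2) (Fin n → ZMod 2)) (x : Fin n → Bool) :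
    kdim C x ≤ Module.finrank (ZMod 2) C := by
  unfold kdim
  have h : shortened C x ≤ C := fun c hc => (mem_shortened.1 hc).1
  exact_mod_cast Submodule.finrank_mono h

/-- A random set of density `θ` contains the support of `c` with probability `θ ^ |c|`; the product
is the indicator of this containment. -/
lemma ex_subset_indicator (θ : ℝ) (c : Fin n → ZMod 2) :
    ex θ (fun x => ∏ i, if x i then (1 : ℝ) else if c i = 0 then 1 else 0) =
      θ ^ hammingNorm c := by
  unfold ex wt
  simp only [← Finset.prod_mul_distrib]
  rw [← Fintype.piFinset_univ, ← Finset.prod_univ_sum (fun _ => (Finset.univ : Finset Bool))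
    (fun i b => (if b = true then θ else 1 - θ) * if b = true then (1 : ℝ) else if c i = 0 then 1 else 0)]
  rw [hammingNorm, ← Finset.prod_const, Finset.prod_filter]
  refine Finset.prod_congr rfl fun i _ => ?_
  by_cases h : c i = 0 <;> simp [h]

/-- The right-hand side is the full weight enumerator of `C` at `θ`, since `2 ^ kdim C x` counts
the codewords supported in `x`. -/
lemma weightEnum_mul_le {θ : ℝ} (h0 : 0 ≤ θ) (h1 : θ ≤ 1)
    (C : Submodule (ZMod 2) (Fin n → ZMod 2)) (i : ℕ) :
    (weightEnum C i : ℝ) * θ ^ i ≤ ex θ (fun x => (2 : ℝ) ^ kdim C x) := by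
  classical
  set A : Finset (Fin n → ZMod 2) := Finset.univ.filter (fun c => c ∈ C ∧ hammingNorm c = i) with hA
  have e1 : weightEnum C i = A.card := by
    rw [weightEnum, Nat.card_eq_fintype_card, Fintype.card_subtype]
  have e2 : (A.card : ℝ) * θ ^ i =
      ex θ (fun x => ∑ c ∈ A, ∏ i, if x i then (1 : ℝ) else if c i = 0 then 1 else 0) := by
    have : ex θ (fun x => ∑ c ∈ A, ∏ i, if x i then (1 : ℝ) else if c i = 0 then 1 else 0) =
        ∑ c ∈ A, ex θ (fun x => ∏ i, if x i then (1 : ℝ) else if c i = 0 then 1 else 0) := by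
      simp only [ex, Finset.mul_sum]; exact Finset.sum_comm
    rw [this]
    simp only [ex_subset_indicator]
    rw [Finset.sum_congr rfl (g := fun _ => θ ^ i), Finset.sum_const, nsmul_eq_mul]
    intro c hc
    rw [(Finset.mem_filter.1 hc).2.2]
  rw [e1, e2]
  refine ex_mono h0 h1 fun x => ?_
  have e3 : (2 : ℝ) ^ kdim C x = ((Finset.univ.filter (fun c => c ∈ shortened C x)).card : ℝ) := by
    have := Module.natCard_eq_pow_finrank (K := ZMod 2) (V := shortened C x)
    rw [Nat.card_eq_fintype_card, Nat.card_zmod, Fintype.card_subtype] at this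
    rw [this, kdim, Real.rpow_natCast]; push_cast; rfl
  rw [e3, ← Finset.sum_boole]
  rw [← Finset.sum_filter_add_sum_filter_not Finset.univ (fun c => c ∈ C ∧ hammingNorm c = i), ← hA]
  refine le_add_of_le_of_nonneg (Finset.sum_le_sum fun c hc => ?_)
    (Finset.sum_nonneg fun c _ => by split_ifs <;> simp)
  split_ifs with h
  · exact Finset.prod_le_one (fun j _ => by split_ifs <;> simp) (fun j _ => by split_ifs <;> simp)
  · have : ∃ j, x j = false ∧ c j ≠ 0 := by
      by_contra hcon
      push Not at hcon
      exact h ⟨(Finset.mem_filter.1 hc).2.1, hcon⟩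
    obtain ⟨j, hj, hcj⟩ := this
    refine le_of_eq (Finset.prod_eq_zero (Finset.mem_univ j) ?_)
    simp [hj, hcj]

/-! ### Sharp threshold for doubly transitive codes -/

lemma ex_le_ex_of_disc_nonneg {F : (Fin n → Bool) → ℝ} (hF : ∀ j x, 0 ≤ disc j F x) {p r : ℝ}
    (hp : 0 ≤ p) (hr : r ≤ 1) (hpr : p ≤ r) : ex p F ≤ ex r F := by
  refine monotoneOn_of_deriv_nonneg (f := fun p => ex p F) (convex_Icc (0 : ℝ) 1)
    (fun q _ => (hasDerivAt_ex F q).continuousAt.continuousWithinAt)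
    (fun q _ => (hasDerivAt_ex F q).differentiableAt.differentiableWithinAt) (fun q hq => ?_)
    ⟨hp, hpr.trans hr⟩ ⟨hp.trans hpr, hr⟩ hpr
  rw [interior_Icc] at hq
  rw [(hasDerivAt_ex F q).deriv]
  exact Finset.sum_nonneg fun j _ => ex_nonneg hq.1.le hq.2.le (hF j)

/-- If `h = E_p (disc i (kdim C))` has derivative at most `K` at `p`, then `h` is within
`O_K (1 / log n)` of `0` or `1`. Double transitivity makes the `n - 1` influences of
`disc i (kdim C)` equal, hence at most `K / (n - 1)` each; then `variance_log_le` applies with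
`t = √n`. -/
lemma transition_slow_imp {C : Submodule (ZMod 2) (Fin n → ZMod 2)} (hC : DoublyTransitive C)
    (hn : 2 ≤ n) (i : Fin n) {p K : ℝ} (h0 : 0 < p) (h1 : p < 1) (hK : 0 < K)
    (hder : ∑ j, ex p (disc j (disc i (kdim C))) ≤ K) :
    ex p (disc i (kdim C)) * (1 - ex p (disc i (kdim C))) * (Real.log n / 2) ≤
      2 * K + 4 * K ^ 2 := by
  set f := disc i (kdim C) with hf
  have hnr : (2 : ℝ) ≤ n := by exact_mod_cast hn
  have hsq : ∀ j x, disc j f x ^ 2 = disc j f x := fun j x => by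
    rcases disc_disc_kdim_mem C i j x with h | h <;> simp [hf, h]
  have habs : ∀ j x, |disc j f x| = disc j f x := fun j x => by
    rcases disc_disc_kdim_mem C i j x with h | h <;> simp [hf, h]
  have hfsq : ∀ x, f x ^ 2 = f x := fun x => by
    rcases disc_kdim_mem C i x with h | h <;> simp [hf, h]
  have hself : ex p (disc i f) = 0 := by
    rw [← ex_const (n := n) p 0]; congr 1; funext x; exact disc_disc_self _ _ _
  have hinf : ∀ j, ex p (fun x => |disc j f x|) ≤ K / (n - 1) := by
    intro j
    simp only [habs]
    change ex p (disc j f) ≤ _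
    by_cases hj : j = i
    · rw [hj, hself]; exact div_nonneg hK.le (by linarith)
    rw [le_div_iff₀ (by linarith)]
    refine le_trans (le_of_eq ?_) hder
    rw [← Finset.add_sum_erase _ _ (Finset.mem_univ i), hself, zero_add,
      Finset.sum_congr rfl (g := fun _ => ex p (disc j f)), Finset.sum_const,
      Finset.card_erase_of_mem (Finset.mem_univ _), Finset.card_univ, Fintype.card_fin,
      nsmul_eq_mul, Nat.cast_sub (by omega)]
    · push_cast; ring
    · intro l hl
      obtain ⟨π, hπ, hi, hlj⟩ := hC i l i j (Finset.ne_of_mem_erase hl).symm (Ne.symm hj)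
      rw [hf, ex_disc_disc_kdim_perm hπ, hi, hlj]
  have hsqrt : 0 < √(n : ℝ) := Real.sqrt_pos.2 (by linarith)
  have V := variance_log_le h0 h1 (div_pos hK (by linarith : (0 : ℝ) < n - 1)) hsqrt f hinf
  simp only [hfsq, hsq] at V
  rw [Real.log_sqrt (by linarith)] at V
  have hb : (n : ℝ) * (K / (n - 1)) ^ 2 * √n ≤ 4 * K ^ 2 := by
    have hs : √(n : ℝ) ≤ n := by
      rw [Real.sqrt_le_left (by linarith)]; nlinarith
    rw [div_pow, mul_div_assoc', div_mul_eq_mul_div, div_le_iff₀ (by nlinarith)]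
    calc (n : ℝ) * K ^ 2 * √n ≤ n * K ^ 2 * n := by gcongr
      _ ≤ _ := by nlinarith [mul_nonneg (sq_nonneg K) (by nlinarith : (0 : ℝ) ≤ 4 * (n - 1) ^ 2 - n * n)]
  have e : ex p (fun x => f x) = ex p f := rfl
  have e2 : ∑ j, ex p (fun x => disc j f x) ≤ K := hder
  rw [e] at V
  nlinarith

/-- Below the threshold `1 - codeRate C` the expected dimension of a random shortened code is
`o(n)`, uniformly over doubly transitive codes. Its derivative is `n * h` with `h` increasing, and
`h` jumps from `η` to nearly `1` within an interval of length `δ / 2`. If that happened before the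
threshold, the total increase over `[0, 1]` would exceed `dim C = n * codeRate C`. -/
lemma ex_kdim_small {l δ η : ℝ} (hl : 0 < l) (hδ : 0 < δ) (hη : 0 < η) :
    ∃ N : ℕ, ∀ n ≥ N, ∀ C : Submodule (ZMod 2) (Fin n → ZMod 2), DoublyTransitive C →
      codeRate C + l + δ ≤ 1 → ex l (kdim C) ≤ η * n := by
  set K := 2 / δ with hK
  have hKpos : 0 < K := by positivity
  have hlim : Tendsto (fun n : ℕ => Real.log (n : ℝ)) atTop atTop :=
    Real.tendsto_log_atTop.comp tendsto_natCast_atTop_atTop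
  obtain ⟨N, hN⟩ := Filter.eventually_atTop.1
    (hlim.eventually_gt_atTop ((2 * K + 4 * K ^ 2) * 2 / (η * (δ / 4))))
  refine ⟨max N 2, fun n hn C hC hrate => ?_⟩
  have hn2 : 2 ≤ n := le_trans (le_max_right _ _) hn
  have hlog := hN n (le_trans (le_max_left _ _) hn)
  have hnr : (0 : ℝ) < n := by exact_mod_cast (by omega : 0 < n)
  have hR0 : 0 ≤ codeRate C := by unfold codeRate; positivity
  have hRn : (Module.finrank (ZMod 2) C : ℝ) = codeRate C * n := by
    unfold codeRate; rw [Fintype.card_fin]; field_simp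
  let i : Fin n := ⟨0, by omega⟩
  have : Nontrivial (Fin n) := Fin.nontrivial_iff_two_le.2 hn2
  set h : ℝ → ℝ := fun p => ex p (disc i (kdim C)) with hh
  have hall : ∀ p j, ex p (disc j (kdim C)) = h p := by
    intro p j
    obtain ⟨i', hi'⟩ := exists_ne i
    obtain ⟨j', hj'⟩ := exists_ne j
    obtain ⟨π, hπ, h1, -⟩ := hC j j' i i' hj'.symm hi'.symm
    rw [ex_disc_kdim_perm hπ, h1]
  have hder : ∀ p, HasDerivAt (fun p => ex p (kdim C)) (n * h p) p := by
    intro p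
    have := hasDerivAt_ex (kdim C) p
    simpa [hall] using this
  have hmono : ∀ p r, 0 ≤ p → r ≤ 1 → p ≤ r → h p ≤ h r := fun p r hp hr hpr =>
    ex_le_ex_of_disc_nonneg (fun j x => by
      rcases disc_disc_kdim_mem C i j x with h | h <;> simp [h]) hp hr hpr
  have hnn : ∀ p, 0 ≤ p → p ≤ 1 → 0 ≤ h p := fun p hp hp1 => ex_nonneg hp hp1 fun x => by
      rcases disc_kdim_mem C i x with h | h <;> simp [h]
  have hle1 : ∀ p, 0 ≤ p → p ≤ 1 → h p ≤ 1 := fun p hp hp1 => by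
    rw [← ex_const (n := n) p 1]
    exact ex_mono hp hp1 fun x => by rcases disc_kdim_mem C i x with h | h <;> simp [h]
  have hsmall : h l ≤ η := by
    by_contra! hbig
    have hp1 : h (l + δ / 2) < 1 - δ / 4 := by
      by_contra! hbig1
      obtain ⟨c, hc, hslope⟩ := exists_hasDerivAt_eq_slope (fun p => ex p (kdim C))
        (fun p => n * h p) (show l + δ / 2 < 1 by linarith)
        (fun q _ => (hder q).continuousAt.continuousWithinAt) (fun q _ => hder q)
      rw [eq_div_iff (by linarith)] at hslope
      have u1 : ex 1 (kdim C) ≤ codeRate C * n := by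
        rw [← hRn, ← ex_const (n := n) 1 (Module.finrank (ZMod 2) C : ℝ)]
        exact ex_mono zero_le_one le_rfl (kdim_le C)
      have u2 : 0 ≤ ex (l + δ / 2) (kdim C) :=
        ex_nonneg (by linarith) (by linarith) fun x => by unfold kdim; positivity
      have u3 : 1 - δ / 4 ≤ h c := hbig1.trans (hmono _ _ (by linarith) hc.2.le hc.1.le)
      have u4 : h c * (1 - (l + δ / 2)) ≤ codeRate C := by
        have : n * (h c * (1 - (l + δ / 2))) ≤ n * codeRate C := by linarith
        exact le_of_mul_le_mul_left this hnr
      nlinarith [mul_le_mul_of_nonneg_right u3 (by linarith : 0 ≤ 1 - (l + δ / 2))]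
    obtain ⟨c, hc, hslope⟩ := exists_hasDerivAt_eq_slope h
      (fun p => ∑ j, ex p (disc j (disc i (kdim C)))) (show l < l + δ / 2 by linarith)
      (fun q _ => (hasDerivAt_ex _ q).continuousAt.continuousWithinAt)
      (fun q _ => hasDerivAt_ex _ q)
    have c0 : 0 < c := hl.trans hc.1
    have c1 : c < 1 := by linarith [hc.2]
    have hsl : ∑ j, ex c (disc j (disc i (kdim C))) ≤ K := by
      rw [hslope, hK, show l + δ / 2 - l = δ / 2 by ring, div_le_div_iff₀ (by linarith) hδ]
      have := hle1 (l + δ / 2) (by linarith) (by linarith)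
      have := hnn l hl.le (by linarith)
      nlinarith
    have T := transition_slow_imp hC hn2 i c0 c1 hKpos hsl
    change h c * (1 - h c) * _ ≤ _ at T
    have hc1 : η ≤ h c := hbig.le.trans (hmono _ _ hl.le c1.le hc.1.le)
    have hc2 : δ / 4 ≤ 1 - h c := by
      have := hmono c (l + δ / 2) c0.le (by linarith) hc.2.le
      linarith
    have hprod : η * (δ / 4) ≤ h c * (1 - h c) := mul_le_mul hc1 hc2 (by positivity) (by linarith)
    rw [div_lt_iff₀ (by positivity)] at hlog
    have hlogpos : 0 ≤ Real.log n := Real.log_natCast_nonneg n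
    nlinarith [mul_le_mul_of_nonneg_right hprod hlogpos]
  obtain ⟨c, hc, hslope⟩ := exists_hasDerivAt_eq_slope (fun p => ex p (kdim C))
    (fun p => n * h p) hl
    (fun q _ => (hder q).continuousAt.continuousWithinAt) (fun q _ => hder q)
  simp only [ex_zero_kdim, sub_zero] at hslope
  rw [eq_div_iff hl.ne'] at hslope
  rw [← hslope]
  have : h c ≤ η := (hmono _ _ hc.1.le (by linarith) hc.2.le).trans hsmall
  have hc0 := hnn c hc.1.le (by linarith [hc.2])
  have : h c * l ≤ η := by nlinarith
  nlinarith

/-! ### From expected dimension to the weight distribution -/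

/-- Equality holds at `x = 1`, and `log (2 ^ y - 1) - 2 log 2 log y` is decreasing because
`2 ^ (1 - y) ≤ 2 - y` on `[0, 1]`. -/
lemma rpow_two_log_two_le {x : ℝ} (h0 : 0 < x) (h1 : x ≤ 1) :
    x ^ (2 * Real.log 2) ≤ (2 : ℝ) ^ x - 1 := by
  have hpos : ∀ y : ℝ, 0 < y → 0 < (2 : ℝ) ^ y - 1 := fun y hy => by
    linarith [Real.one_lt_rpow (by norm_num : (1 : ℝ) < 2) hy]
  have hd : ∀ y : ℝ, 0 < y → HasDerivAt
      (fun y => Real.log ((2 : ℝ) ^ y - 1) - 2 * Real.log 2 * Real.log y)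
      ((2 : ℝ) ^ y * Real.log 2 / ((2 : ℝ) ^ y - 1) - 2 * Real.log 2 * y⁻¹) y := fun y hy => by
    have h2 : HasDerivAt (fun y : ℝ => (2 : ℝ) ^ y) ((2 : ℝ) ^ y * Real.log 2) y := by
      simpa [mul_comm] using (hasDerivAt_id y).const_rpow (by norm_num : (0 : ℝ) < 2)
    exact ((h2.sub_const 1).log (hpos y hy).ne').sub
      ((Real.hasDerivAt_log hy.ne').const_mul _)
  have anti : AntitoneOn (fun y => Real.log ((2 : ℝ) ^ y - 1) - 2 * Real.log 2 * Real.log y)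
      (Set.Icc x 1) := by
    refine antitoneOn_of_deriv_nonpos (convex_Icc _ _)
      (fun y hy => (hd y (h0.trans_le hy.1)).continuousAt.continuousWithinAt)
      (fun y hy => ?_) (fun y hy => ?_)
    · rw [interior_Icc] at hy
      exact (hd y (h0.trans hy.1)).differentiableAt.differentiableWithinAt
    · rw [interior_Icc] at hy
      have hy0 := h0.trans hy.1
      rw [(hd y hy0).deriv]
      have hB := rpow_one_add_le_one_add_mul_self (s := (1 : ℝ)) (by norm_num)
        (p := 1 - y) (by linarith [hy.2]) (by linarith)
      have hB' : 2 ≤ (2 : ℝ) ^ y * (2 - y) := by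
        norm_num at hB
        rw [Real.rpow_sub (by norm_num), Real.rpow_one,
          div_le_iff₀ (by positivity)] at hB
        nlinarith
      have hl2 : 0 < Real.log 2 := Real.log_pos (by norm_num)
      rw [sub_nonpos, ← div_eq_mul_inv, div_le_div_iff₀ (hpos y hy0) hy0]
      nlinarith
  have h := anti ⟨le_rfl, h1⟩ ⟨h1, le_rfl⟩ h1
  norm_num at h
  rw [← Real.log_le_log_iff (by positivity) (hpos x h0), Real.log_rpow h0]
  linarith

lemma weightEnum_le_of_ex {l η : ℝ} (hl : 0 < l) (hl1 : l ≤ 1)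
    (C : Submodule (ZMod 2) (Fin n → ZMod 2)) (hk : ex l (kdim C) ≤ η * n) (i : ℕ) :
    (weightEnum C i : ℝ) ≤ (2 : ℝ) ^ (η * n) * (1 / l) ^ (2 * Real.log 2 * i) := by
  set θ := (2 : ℝ) ^ l - 1 with hθ
  have hθ0 : 0 < θ := by
    rw [hθ]; linarith [Real.one_lt_rpow (by norm_num : (1 : ℝ) < 2) hl]
  have hθ1 : θ ≤ 1 := by
    have := Real.rpow_le_rpow_of_exponent_le (by norm_num : (1 : ℝ) ≤ 2) hl1
    rw [Real.rpow_one] at this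
    linarith
  have h1 := weightEnum_mul_le hθ0.le hθ1 C i
  have h2 := ex_two_rpow_le hθ0.le hθ1 hl.le hl1 (by rw [hθ]; ring) (kdim C) (fun j x => by
    rcases disc_kdim_mem C j x with h | h <;> simp [h])
  have h3 : (2 : ℝ) ^ ex l (kdim C) ≤ (2 : ℝ) ^ (η * n) :=
    Real.rpow_le_rpow_of_exponent_le (by norm_num) hk
  have h4 : (l ^ (2 * Real.log 2)) ^ i ≤ θ ^ i :=
    pow_le_pow_left₀ (by positivity) (rpow_two_log_two_le hl hl1) i
  have e : (1 / l) ^ (2 * Real.log 2 * i) = ((l ^ (2 * Real.log 2)) ^ i)⁻¹ := by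
    rw [one_div, Real.inv_rpow hl.le, Real.rpow_mul hl.le, Real.rpow_natCast]
  rw [e, ← div_eq_mul_inv, le_div_iff₀ (by positivity)]
  calc _ ≤ (weightEnum C i : ℝ) * θ ^ i := by gcongr
    _ ≤ _ := h1.trans (h2.trans h3)

/-! ### Adjoining the all-ones word -/

/-- The all-ones word. -/
def ones : Fin n → ZMod 2 := fun _ => 1

/-- The code generated by `C` and the all-ones word. -/
def augmented (C : Submodule (ZMod 2) (Fin n → ZMod 2)) : Submodule (ZMod 2) (Fin n → ZMod 2) :=
  C ⊔ Submodule.span (ZMod 2) {ones}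

lemma mem_augmented {C : Submodule (ZMod 2) (Fin n → ZMod 2)} {x : Fin n → ZMod 2} :
    x ∈ augmented C ↔ ∃ c ∈ C, ∃ a : ZMod 2, c + a • ones = x := by
  simp [augmented, Submodule.mem_sup, Submodule.mem_span_singleton]

lemma augmented_doublyTransitive {C : Submodule (ZMod 2) (Fin n → ZMod 2)}
    (hC : DoublyTransitive C) : DoublyTransitive (augmented C) := by
  intro i₁ j₁ i₂ j₂ h1 h2
  obtain ⟨π, hπ, hi, hj⟩ := hC i₁ j₁ i₂ j₂ h1 h2
  refine ⟨π, fun x => ?_, hi, hj⟩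
  rw [mem_augmented, mem_augmented]
  constructor
  · rintro ⟨c, hc, a, rfl⟩
    exact ⟨c ∘ π, (hπ c).1 hc, a, rfl⟩
  · rintro ⟨c, hc, a, h⟩
    have e : (c ∘ π.symm) ∘ π = c := by funext j; simp
    refine ⟨c ∘ π.symm, (hπ _).2 (by rwa [e]), a, ?_⟩
    funext j
    simpa [ones] using congrFun h (π.symm j)

lemma codeRate_augmented_le (C : Submodule (ZMod 2) (Fin n → ZMod 2)) :
    codeRate (augmented C) ≤ codeRate C + 1 / n := by
  unfold codeRate
  rw [Fintype.card_fin, ← add_div]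
  gcongr
  have h1 := Submodule.finrank_add_le_finrank_add_finrank C (Submodule.span (ZMod 2) {ones})
  have h2 := finrank_span_le_card (R := ZMod 2) ({ones} : Set (Fin n → ZMod 2))
  simp at h2
  unfold augmented
  exact_mod_cast h1.trans (by omega)

lemma weightEnum_le_augmented (C : Submodule (ZMod 2) (Fin n → ZMod 2)) (i : ℕ) :
    weightEnum C i ≤ weightEnum (augmented C) i := by
  unfold weightEnum
  refine Nat.card_le_card_of_injective
    (fun x => ⟨x.1, (le_sup_left : C ≤ augmented C) x.2.1, x.2.2⟩) ?_
  intro x y h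
  exact Subtype.ext (congrArg (fun z => z.1) h)

lemma weightEnum_le_augmented_compl (C : Submodule (ZMod 2) (Fin n → ZMod 2)) (i : ℕ) :
    weightEnum C i ≤ weightEnum (augmented C) (n - i) := by
  unfold weightEnum
  have hw : ∀ x : Fin n → ZMod 2, hammingNorm (x + ones) = n - hammingNorm x := by
    intro x
    have hx : ∀ a : ZMod 2, a + 1 ≠ 0 ↔ ¬ a ≠ 0 := by decide
    have := Finset.card_filter_add_card_filter_not (s := (Finset.univ : Finset (Fin n)))
      (fun i => x i ≠ 0)
    rw [Finset.card_univ, Fintype.card_fin] at this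
    simp only [hammingNorm, Pi.add_apply, ones, hx]
    omega
  refine Nat.card_le_card_of_injective
    (fun x => ⟨x.1 + ones, mem_augmented.2 ⟨x.1, x.2.1, 1, by simp⟩, by rw [hw, x.2.2]⟩) ?_
  intro x y h
  exact Subtype.ext (add_right_cancel (congrArg (fun z => z.1) h))

end BiasedCube

/-- weight distribution bound for doubly transitive codes. -/
theorem weight_bound_doubly_transitive (R : ℝ) (hR0 : 0 < R) (hR1 : R < 1)
    (n : ℕ → ℕ) (hn : StrictMono n) (hpos : ∀ k, 0 < n k)
    (C : ∀ k, Submodule (ZMod 2) (Fin (n k) → ZMod 2))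
    (hdt : ∀ k, DoublyTransitive (C k))
    (hrate : Filter.Tendsto (fun k => codeRate (C k)) Filter.atTop (nhds R)) :
    ∀ ε > (0 : ℝ), ∃ N : ℕ, ∀ k, N ≤ n k → ∀ i ≤ n k,
      (weightEnum (C k) i : ℝ) ≤
        (2 : ℝ) ^ (ε * (n k : ℝ)) *
          (1 / (1 - R)) ^ (2 * Real.log 2 * (min i (n k - i) : ℝ)) := by
  intro ε hε
  have hq : 0 < 1 - R := by linarith
  -- the parameter `l` lies slightly below `1 - R`; the loss `(1 - R) / l = 2 ^ (ε / 4)` is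
  -- absorbed by the factor `2 ^ (ε n)`
  set l := (1 - R) * (2 : ℝ) ^ (-(ε / 4)) with hl
  have h2 : (2 : ℝ) ^ (-(ε / 4)) < 1 :=
    Real.rpow_lt_one_of_one_lt_of_neg (by norm_num) (by linarith)
  have hl0 : 0 < l := by positivity
  have hlR : l < 1 - R := by rw [hl]; nlinarith
  set δ := (1 - R - l) / 3 with hδ
  have hδ0 : 0 < δ := by rw [hδ]; linarith
  obtain ⟨N₁, hN₁⟩ := BiasedCube.ex_kdim_small hl0 hδ0 (show 0 < ε / 4 by linarith)
  obtain ⟨k₀, hk₀⟩ := Filter.eventually_atTop.1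
    (hrate.eventually_lt_const (show R < R + δ by linarith))
  obtain ⟨N₂, hN₂⟩ := exists_nat_gt (1 / δ)
  refine ⟨max N₁ (max N₂ (n k₀)), fun k hk i hi => ?_⟩
  have hk1 : N₁ ≤ n k := (le_max_left _ _).trans hk
  have hk2 : N₂ ≤ n k := ((le_max_left _ _).trans (le_max_right _ _)).trans hk
  have hk3 : k₀ ≤ k := hn.le_iff_le.1 (((le_max_right _ _).trans (le_max_right _ _)).trans hk)
  have hnk : (0 : ℝ) < n k := by exact_mod_cast hpos k
  have hinv : 1 / (n k : ℝ) ≤ δ := by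
    rw [div_le_iff₀ hnk]
    have : 1 / δ ≤ n k := hN₂.le.trans (by exact_mod_cast hk2)
    rw [div_le_iff₀ hδ0] at this
    linarith
  have hr := BiasedCube.codeRate_augmented_le (C k)
  have hr' := hk₀ k hk3
  have hex := hN₁ (n k) hk1 (BiasedCube.augmented (C k))
    (BiasedCube.augmented_doublyTransitive (hdt k)) (by linarith)
  have bound : ∀ j ≤ n k, (weightEnum (BiasedCube.augmented (C k)) j : ℝ) ≤
      (2 : ℝ) ^ (ε * (n k : ℝ)) * (1 / (1 - R)) ^ (2 * Real.log 2 * (j : ℝ)) := by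
    intro j hj
    refine (BiasedCube.weightEnum_le_of_ex hl0 (by linarith) _ hex j).trans ?_
    have e1 : 1 / l = 1 / (1 - R) * (2 : ℝ) ^ (ε / 4) := by
      rw [hl, Real.rpow_neg (by norm_num)]; field_simp
    rw [e1, Real.mul_rpow (by positivity) (by positivity), mul_left_comm, mul_comm]
    gcongr
    rw [← Real.rpow_mul (by norm_num), ← Real.rpow_add (by norm_num)]
    refine Real.rpow_le_rpow_of_exponent_le (by norm_num) ?_
    have hlog : Real.log 2 ≤ 1 := by
      have := Real.log_le_sub_one_of_pos (show (0 : ℝ) < 2 by norm_num)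
      linarith
    have hjr : (j : ℝ) ≤ n k := by exact_mod_cast hj
    have hlj : Real.log 2 * j ≤ 1 * n k := mul_le_mul hlog hjr (by positivity) (by norm_num)
    nlinarith
  have hij : (min i (n k - i) : ℝ) = i ∨ (min i (n k - i) : ℝ) = ((n k - i : ℕ) : ℝ) := by
    rw [Nat.cast_sub hi]
    exact min_choice _ _
  rcases hij with h | h <;> rw [h]
  · exact le_trans (by exact_mod_cast BiasedCube.weightEnum_le_augmented (C k) i) (bound i hi)
  · exact le_trans (by exact_mod_cast BiasedCube.weightEnum_le_augmented_compl (C k) i)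
      (bound _ (Nat.sub_le _ _))
end

section
/- Let 0 < R < 1 and set θ = R^{2·ln 2}. Let (C_n) be a sequence of doubly transitive binary linear codes, where C_n has length n (n ranging over an infinite set of positive integers), such that the rates R(C_n) converge to R. Then for every ε > 0 there exists N such that for all n ≥ N and all 0 ≤ i ≤ n, writing i* = min(i, n-i), the weight distribution of C_n satisfies: if i* ≤ (1-θ)n/2 then a_i ≤ 2^{εn} · |C_n| / ((1-θ)^{i*} (1+θ)^{n-i*}), and otherwise a_i ≤ 2^{εn} · binom(n, i*) · |C_n| / 2^n. -/
/-!
For a set `S` of coordinates let `d(S) = |S| - rank (C|_S)`. The MacWilliams identity gives, for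
`0 ≤ t ≤ 1`,
`∑_{c ∈ C} (1 - t)^|c| (1 + t)^(n - |c|) = |C| * E_{S ~ t} 2 ^ d(S)`,
where `S ~ t` contains each coordinate independently with probability `t` (`macWilliams`). So
`a_i (1 - t)^i (1 + t)^(n - i) ≤ |C| * E_{S ~ t} 2 ^ d(S)`, and it suffices to show that the
expectation is `2 ^ o(n)` for `t ≤ θ = R ^ (2 log 2)`.

*Reverse Jensen.* As `d` is monotone with increments `0` or `1`, one has
`log₂ E_{S ~ t} 2 ^ d(S) ≤ E_{S ~ R} d(S)` for `t ≤ R ^ (2 log 2)`. This tensorizes from the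
one-variable inequality `log (1 + t b) ≤ R log (1 + b)`, `0 ≤ b ≤ 1` (`log_bExp_le`).

*Sharp threshold.* By Russo's formula `E_{S ~ p} d(S) / n` has derivative `h(p)`, the probability that
coordinate `i` is determined by those in `S`, a monotone event. Its mass over `[0, 1]` is `1 - R(C)`.
By double transitivity the influences of the other coordinates on this event are all equal, and a
Kahn–Kalai–Linial inequality, derived from a logarithmic Sobolev inequality (`log_sobolev`, `kkl`),
gives `h' ≥ c log n * h (1 - h)`. Hence the mass of `h` before `R(C)` is `O(1 / log n)`
(`threshold_mass`), so `E_{S ~ R} d(S) = o(n)` (`bExp_dC_le`).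

Adjoining the all-ones word to `C` makes the weight distribution symmetric, so that `i` may be replaced
by `min(i, n - i)`. The first bound is the case `t = θ`; for the second one takes `t = 1 - 2 i / n` and
uses that the binomial distribution with mean `i` has mass at least `1 / (n + 1)` at `i`.
-/

open Finset Filter

/-! ### Expectations on the biased cube -/

/-- Expectation of `f` under the product measure on `{0,1}^n` in which every bit is `true` with
probability `p`, defined by conditioning on the first bit. -/
noncomputable def bExp (p : ℝ) : (n : ℕ) → ((Fin n → Bool) → ℝ) → ℝ
  | 0, f => f Fin.elim0
  | n + 1, f => p * bExp p n (fun x => f (Fin.cons true x)) +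
      (1 - p) * bExp p n (fun x => f (Fin.cons false x))

/-- The discrete derivative of `f` in direction `i`. -/
def der {n : ℕ} (i : Fin n) (f : (Fin n → Bool) → ℝ) (x : Fin n → Bool) : ℝ :=
  f (Function.update x i true) - f (Function.update x i false)

lemma der_zero_cons {n : ℕ} (f : (Fin (n + 1) → Bool) → ℝ) (b : Bool) (x : Fin n → Bool) :
    der 0 f (Fin.cons b x) = f (Fin.cons true x) - f (Fin.cons false x) := by
  simp [der, Fin.update_cons_zero]

lemma der_succ_cons {n : ℕ} (f : (Fin (n + 1) → Bool) → ℝ) (i : Fin n) (b : Bool)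
    (x : Fin n → Bool) :
    der i.succ f (Fin.cons b x) = der i (fun y => f (Fin.cons b y)) x := by
  simp [der, Fin.cons_update]

lemma bExp_add (p : ℝ) : ∀ (n : ℕ) (f g : (Fin n → Bool) → ℝ),
    bExp p n (fun x => f x + g x) = bExp p n f + bExp p n g
  | 0, f, g => rfl
  | n + 1, f, g => by
      simp only [bExp, bExp_add p n]; ring

lemma bExp_smul (p c : ℝ) : ∀ (n : ℕ) (f : (Fin n → Bool) → ℝ),
    bExp p n (fun x => c * f x) = c * bExp p n f
  | 0, f => rfl
  | n + 1, f => by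
      simp only [bExp, bExp_smul p c n]; ring

lemma bExp_const (p c : ℝ) : ∀ n : ℕ, bExp p n (fun _ => c) = c
  | 0 => rfl
  | n + 1 => by simp only [bExp, bExp_const p c n]; ring

lemma bExp_sub (p : ℝ) (n : ℕ) (f g : (Fin n → Bool) → ℝ) :
    bExp p n (fun x => f x - g x) = bExp p n f - bExp p n g := by
  have h := bExp_add p n (fun x => f x - g x) g
  simp only [sub_add_cancel] at h
  linarith

lemma bExp_sum (p : ℝ) (n : ℕ) {α : Type*} (s : Finset α) (f : α → (Fin n → Bool) → ℝ) :
    bExp p n (fun x => ∑ a ∈ s, f a x) = ∑ a ∈ s, bExp p n (f a) := by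
  classical
  induction s using Finset.induction_on with
  | empty => simp [bExp_const]
  | insert a s ha ih => simp only [Finset.sum_insert ha, bExp_add, ih]

lemma bExp_mono {p : ℝ} (h0 : 0 ≤ p) (h1 : p ≤ 1) : ∀ (n : ℕ) {f g : (Fin n → Bool) → ℝ},
    (∀ x, f x ≤ g x) → bExp p n f ≤ bExp p n g
  | 0, f, g, h => h _
  | n + 1, f, g, h => by
      have a := bExp_mono h0 h1 n (fun x => h (Fin.cons true x))
      have b := bExp_mono h0 h1 n (fun x => h (Fin.cons false x))
      exact add_le_add (mul_le_mul_of_nonneg_left a h0)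
        (mul_le_mul_of_nonneg_left b (by linarith))

lemma bExp_nonneg {p : ℝ} (h0 : 0 ≤ p) (h1 : p ≤ 1) (n : ℕ) {f : (Fin n → Bool) → ℝ}
    (h : ∀ x, 0 ≤ f x) : 0 ≤ bExp p n f := by
  have := bExp_mono h0 h1 n h
  rwa [bExp_const] at this

lemma bExp_pos {p : ℝ} (h0 : 0 ≤ p) (h1 : p ≤ 1) : ∀ (n : ℕ) {f : (Fin n → Bool) → ℝ},
    (∀ x, 0 < f x) → 0 < bExp p n f
  | 0, f, h => h _
  | n + 1, f, h => by
      have a := bExp_pos h0 h1 n (fun x => h (Fin.cons true x))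
      have b := bExp_pos h0 h1 n (fun x => h (Fin.cons false x))
      rcases h0.eq_or_lt with h | h
      · subst h; simpa [bExp] using b
      · exact add_pos_of_pos_of_nonneg (mul_pos h a) (mul_nonneg (by linarith) b.le)

lemma bExp_prod (p : ℝ) : ∀ (n : ℕ) (φ : Fin n → Bool → ℝ),
    bExp p n (fun x => ∏ i, φ i (x i)) = ∏ i, (p * φ i true + (1 - p) * φ i false)
  | 0, φ => by simp [bExp]
  | n + 1, φ => by
      simp only [bExp, Fin.prod_univ_succ, Fin.cons_zero, Fin.cons_succ, bExp_smul]
      rw [bExp_prod p n (fun i => φ i.succ)]; ring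

lemma bExp_eq_sum (p : ℝ) : ∀ (n : ℕ) (f : (Fin n → Bool) → ℝ),
    bExp p n f = ∑ x : Fin n → Bool, (∏ i, if x i then p else 1 - p) * f x
  | 0, f => by simpa [bExp] using congrArg f (Subsingleton.elim _ _)
  | n + 1, f => by
      rw [← (Fin.consEquiv (fun _ : Fin (n + 1) => Bool)).sum_comp, Fintype.sum_prod_type]
      simp only [bExp, bExp_eq_sum p n, Fintype.sum_bool, Fin.consEquiv_apply,
        Fin.prod_univ_succ, Fin.cons_zero, Fin.cons_succ, Finset.mul_sum]
      simp [mul_assoc]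
      rfl

lemma bExp_perm (p : ℝ) (n : ℕ) (f : (Fin n → Bool) → ℝ) (π : Equiv.Perm (Fin n)) :
    bExp p n (fun x => f (x ∘ π)) = bExp p n f := by
  rw [bExp_eq_sum, bExp_eq_sum, ← (Equiv.arrowCongr π (Equiv.refl Bool)).sum_comp]
  refine Finset.sum_congr rfl fun x _ => ?_
  congr 1
  · rw [← Equiv.prod_comp π]
    simp
  · congr 1; ext i; simp

/-- Russo's formula. -/
lemma bExp_hasDerivAt (p : ℝ) : ∀ (n : ℕ) (f : (Fin n → Bool) → ℝ),
    HasDerivAt (fun q => bExp q n f) (∑ i, bExp p n (der i f)) p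
  | 0, f => by simpa [bExp] using hasDerivAt_const p (f Fin.elim0)
  | n + 1, f => by
      have a := bExp_hasDerivAt p n (fun x => f (Fin.cons true x))
      have b := bExp_hasDerivAt p n (fun x => f (Fin.cons false x))
      have h := ((hasDerivAt_id p).mul a).add (((hasDerivAt_id p).const_sub 1).mul b)
      refine h.congr_deriv ?_
      simp only [Fin.sum_univ_succ, bExp, der_zero_cons, der_succ_cons, bExp_sub,
        Finset.sum_add_distrib, ← Finset.mul_sum, id]
      ring

lemma bExp_cauchy {p : ℝ} (h0 : 0 ≤ p) (h1 : p ≤ 1) (n : ℕ) (f g : (Fin n → Bool) → ℝ) :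
    bExp p n (fun x => f x * g x) ^ 2 ≤
      bExp p n (fun x => f x ^ 2) * bExp p n (fun x => g x ^ 2) := by
  have key : ∀ t : ℝ, 0 ≤ bExp p n (fun x => f x ^ 2) * (t * t) +
      (2 * bExp p n (fun x => f x * g x)) * t + bExp p n (fun x => g x ^ 2) := by
    intro t
    have : bExp p n (fun x => (t * f x + g x) ^ 2) = bExp p n (fun x => f x ^ 2) * (t * t) +
      (2 * bExp p n (fun x => f x * g x)) * t + bExp p n (fun x => g x ^ 2) := by
      have e : (fun x => (t * f x + g x) ^ 2) =
          fun x => ((t * t) * f x ^ 2 + (2 * t) * (f x * g x)) + g x ^ 2 := by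
        funext x; ring
      rw [e, bExp_add, bExp_add, bExp_smul, bExp_smul]; ring
    rw [← this]
    exact bExp_nonneg h0 h1 n fun x => sq_nonneg _
  have := discrim_le_zero key
  unfold discrim at this
  nlinarith

/-! ### Logarithmic Sobolev and KKL inequalities -/

/-- Two-point entropy bound, from `log z ≤ z - 1`. In the application `A`, `B` are second moments of
`v`, `w` and `D` is the second moment of `v - w`. -/
lemma two_point_ent {p A B : ℝ} (h0 : 0 ≤ p) (h1 : p ≤ 1) (hA : 0 ≤ A) (hB : 0 ≤ B) {D : ℝ}
    (hD : 0 ≤ D) (hAB : (A - B) ^ 2 ≤ D * (2 * (A + B))) :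
    p * (A * Real.log A) + (1 - p) * (B * Real.log B) -
      (p * A + (1 - p) * B) * Real.log (p * A + (1 - p) * B) ≤ 2 * D := by
  set M := p * A + (1 - p) * B with hM
  have hq : 0 ≤ 1 - p := by linarith
  have hpA : 0 ≤ p * A := mul_nonneg h0 hA
  have hqB : 0 ≤ (1 - p) * B := mul_nonneg hq hB
  rcases (add_nonneg hpA hqB).eq_or_lt with h | h
  · have e1 : p * A = 0 := by linarith
    have e2 : (1 - p) * B = 0 := by linarith
    have : M = 0 := by linarith
    rw [this, ← mul_assoc, ← mul_assoc, e1, e2]; simp; exact hD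
  · have hMpos : 0 < M := h
    have tl : ∀ X : ℝ, 0 ≤ X → X * Real.log X ≤ X * Real.log M + X * (X / M - 1) := by
      intro X hX
      rcases hX.eq_or_lt with h | h
      · simp [← h]
      · have := Real.log_le_sub_one_of_pos (div_pos h hMpos)
        rw [Real.log_div h.ne' hMpos.ne'] at this
        nlinarith
    have a := mul_le_mul_of_nonneg_left (tl A hA) h0
    have b := mul_le_mul_of_nonneg_left (tl B hB) hq
    have id1 : p * (A * (A / M - 1)) + (1 - p) * (B * (B / M - 1)) =
        p * (1 - p) * (A - B) ^ 2 / M := by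
      have : p * (A * (A / M - 1)) + (1 - p) * (B * (B / M - 1)) =
        (p * A ^ 2 + (1 - p) * B ^ 2 - M * M) / M := by field_simp; rw [hM]; ring
      rw [this, hM]; ring
    have bound : p * (1 - p) * (A - B) ^ 2 / M ≤ 2 * D := by
      rw [div_le_iff₀ hMpos]
      have hpq : 0 ≤ p * (1 - p) := mul_nonneg h0 hq
      have s1 := mul_le_mul_of_nonneg_left hAB hpq
      have s2 : p * (1 - p) * (A + B) ≤ M := by
        rw [hM]; nlinarith [mul_nonneg h0 hpA, mul_nonneg hq hqB]
      have := mul_le_mul_of_nonneg_left s2 hD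
      nlinarith
    nlinarith

/-- Logarithmic Sobolev inequality on the biased cube, with a constant uniform in `p`. -/
lemma log_sobolev {p : ℝ} (h0 : 0 ≤ p) (h1 : p ≤ 1) : ∀ (n : ℕ) (u : (Fin n → Bool) → ℝ),
    bExp p n (fun x => u x ^ 2 * Real.log (u x ^ 2)) -
      bExp p n (fun x => u x ^ 2) * Real.log (bExp p n (fun x => u x ^ 2)) ≤
    2 * ∑ i, bExp p n (fun x => der i u x ^ 2)
  | 0, u => by simp [bExp]
  | n + 1, u => by
      set v : (Fin n → Bool) → ℝ := fun x => u (Fin.cons true x)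
      set w : (Fin n → Bool) → ℝ := fun x => u (Fin.cons false x)
      have a := mul_le_mul_of_nonneg_left (log_sobolev h0 h1 n v) h0
      have b := mul_le_mul_of_nonneg_left (log_sobolev h0 h1 n w) (sub_nonneg.2 h1)
      set A := bExp p n (fun x => v x ^ 2)
      set B := bExp p n (fun x => w x ^ 2)
      have hA : 0 ≤ A := bExp_nonneg h0 h1 n fun x => sq_nonneg _
      have hB : 0 ≤ B := bExp_nonneg h0 h1 n fun x => sq_nonneg _
      set D := bExp p n (fun x => (v x - w x) ^ 2)
      have hD : 0 ≤ D := bExp_nonneg h0 h1 n fun x => sq_nonneg _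
      have hAB : (A - B) ^ 2 ≤ D * (2 * (A + B)) := by
        have e : A - B = bExp p n (fun x => (v x - w x) * (v x + w x)) := by
          rw [← bExp_sub]; congr 1; funext x; ring
        have e2 : bExp p n (fun x => (v x + w x) ^ 2) ≤ 2 * (A + B) := by
          rw [← bExp_add, ← bExp_smul]
          refine bExp_mono h0 h1 n fun x => ?_
          nlinarith [sq_nonneg (v x - w x)]
        rw [e]
        exact (bExp_cauchy h0 h1 n _ _).trans (mul_le_mul_of_nonneg_left e2 hD)
      have t := two_point_ent h0 h1 hA hB hD hAB
      simp only [Fin.sum_univ_succ, bExp, der_zero_cons, der_succ_cons,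
        Finset.sum_add_distrib, ← Finset.mul_sum]
      have e3 : p * D + (1 - p) * D = D := by ring
      linarith

lemma sq_mul_log_sq_ge (t : ℝ) : 2 * t ^ 2 - 2 * |t| ≤ t ^ 2 * Real.log (t ^ 2) := by
  rcases eq_or_ne t 0 with h | h
  · simp [h]
  · have hp : 0 < |t| := abs_pos.2 h
    have h1 := Real.one_sub_inv_le_log_of_pos hp
    rw [← sq_abs t, Real.log_pow]
    have : |t| ^ 2 * (1 - |t|⁻¹) = |t| ^ 2 - |t| := by field_simp
    have h2 := mul_le_mul_of_nonneg_left h1 (sq_nonneg |t|)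
    push_cast
    nlinarith

/-- A Kahn–Kalai–Linial type inequality: if the derivatives of `f` are bounded by `1` and have mean
absolute value at most `I`, then `Var f * log (1 / I)` is bounded by the total influence. The first bit is averaged out; the
increment is controlled by applying `log_sobolev` to the derivative in the first direction. -/
lemma kkl {p : ℝ} (h0 : 0 ≤ p) (h1 : p ≤ 1) {I : ℝ} (hI : 0 < I) (hI1 : I ≤ 1) :
    ∀ (n : ℕ) (f : (Fin n → Bool) → ℝ),
    (∀ i x, |der i f x| ≤ 1) → (∀ i, bExp p n (fun x => |der i f x|) ≤ I) →
    (bExp p n (fun x => f x ^ 2) - bExp p n f ^ 2) * Real.log (1 / I) ≤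
      2 * ∑ i, bExp p n (fun x => der i f x ^ 2) + 2 * ∑ i, bExp p n (fun x => |der i f x|)
  | 0, f, _, _ => by simp [bExp]
  | n + 1, f, hf, hfI => by
      have hq : 0 ≤ 1 - p := by linarith
      have hpq : 0 ≤ p * (1 - p) := mul_nonneg h0 hq
      have hpq1 : p * (1 - p) ≤ 1 := by nlinarith
      set v : (Fin n → Bool) → ℝ := fun x => f (Fin.cons true x) with hv
      set w : (Fin n → Bool) → ℝ := fun x => f (Fin.cons false x) with hw
      set g : (Fin n → Bool) → ℝ := fun x => p * v x + (1 - p) * w x with hg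
      set u : (Fin n → Bool) → ℝ := fun x => v x - w x with hu
      have hdg : ∀ i x, der i g x = p * der i v x + (1 - p) * der i w x := by
        intro i x; simp only [der, hg]; ring
      have hdu : ∀ i x, der i u x = der i v x - der i w x := by
        intro i x; simp only [der, hu]; ring
      have hdv1 : ∀ i x, |der i v x| ≤ 1 := fun i x => by
        have := hf i.succ (Fin.cons true x); rwa [der_succ_cons] at this
      have hdw1 : ∀ i x, |der i w x| ≤ 1 := fun i x => by
        have := hf i.succ (Fin.cons false x); rwa [der_succ_cons] at this
      have hu1 : ∀ x, |u x| ≤ 1 := fun x => by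
        have := hf 0 (Fin.cons true x); rwa [der_zero_cons] at this
      have habs : ∀ i x, |der i g x| ≤ p * |der i v x| + (1 - p) * |der i w x| := by
        intro i x
        rw [hdg]
        refine (abs_add_le _ _).trans ?_
        rw [abs_mul, abs_mul, abs_of_nonneg h0, abs_of_nonneg hq]
      have hEabs : ∀ i, bExp p n (fun x => |der i g x|) ≤
          p * bExp p n (fun x => |der i v x|) + (1 - p) * bExp p n (fun x => |der i w x|) := by
        intro i
        rw [← bExp_smul, ← bExp_smul, ← bExp_add]
        exact bExp_mono h0 h1 n (habs i)
      have ih := kkl h0 h1 hI hI1 n g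
        (fun i x => (habs i x).trans (by nlinarith [hdv1 i x, hdw1 i x]))
        (fun i => (hEabs i).trans (by
          have := hfI i.succ
          simpa only [bExp, der_succ_cons] using this))
      have huI : bExp p n (fun x => |u x|) ≤ I := by
        have := hfI 0
        simp only [bExp, der_zero_cons] at this
        linarith
      -- the log-Sobolev inequality for `u`, whose second moment is at most `I`
      have hU : bExp p n (fun x => u x ^ 2) * Real.log (1 / I) ≤
          2 * ∑ i, bExp p n (fun x => der i u x ^ 2) + 2 * bExp p n (fun x => |u x|) := by
        have ls := log_sobolev h0 h1 n u
        set V := bExp p n (fun x => u x ^ 2)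
        have hV0 : 0 ≤ V := bExp_nonneg h0 h1 n fun x => sq_nonneg _
        have hVI : V ≤ I := (bExp_mono h0 h1 n fun x => by
          rw [← sq_abs]; nlinarith [abs_nonneg (u x), hu1 x]).trans huI
        have lb : bExp p n (fun x => 2 * u x ^ 2 - 2 * |u x|) ≤
            bExp p n (fun x => u x ^ 2 * Real.log (u x ^ 2)) :=
          bExp_mono h0 h1 n fun x => sq_mul_log_sq_ge _
        rw [bExp_sub, bExp_smul, bExp_smul] at lb
        have lV : V * Real.log (1 / I) ≤ - (V * Real.log V) := by
          rcases hV0.eq_or_lt with h | h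
          · simp [← h]
          · rw [one_div, Real.log_inv]
            have := mul_le_mul_of_nonneg_left (Real.log_le_log h hVI) hV0
            linarith
        linarith
      have hU' := mul_le_mul_of_nonneg_left hU hpq
      have eVar : bExp p (n + 1) (fun x => f x ^ 2) - bExp p (n + 1) f ^ 2 =
          (bExp p n (fun x => g x ^ 2) - bExp p n g ^ 2) +
            p * (1 - p) * bExp p n (fun x => u x ^ 2) := by
        have e1 : bExp p n (fun x => g x ^ 2) + p * (1 - p) * bExp p n (fun x => u x ^ 2) =
            p * bExp p n (fun x => v x ^ 2) + (1 - p) * bExp p n (fun x => w x ^ 2) := by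
          simp only [← bExp_smul, ← bExp_add]
          congr 1; funext x; simp only [hg, hu]; ring
        have e2 : bExp p n g = p * bExp p n v + (1 - p) * bExp p n w := by
          simp only [← bExp_smul, ← bExp_add]; rfl
        simp only [bExp]
        rw [e2]
        linarith
      have eDir : ∀ i, bExp p n (fun x => der i g x ^ 2) +
          p * (1 - p) * bExp p n (fun x => der i u x ^ 2) =
          p * bExp p n (fun x => der i v x ^ 2) + (1 - p) * bExp p n (fun x => der i w x ^ 2) := by
        intro i
        simp only [← bExp_smul, ← bExp_add]
        congr 1; funext x; rw [hdg, hdu]; ring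
      have sDir := Finset.sum_congr rfl fun i (_ : i ∈ (Finset.univ : Finset (Fin n))) => eDir i
      have sAbs := Finset.sum_le_sum fun i (_ : i ∈ (Finset.univ : Finset (Fin n))) => hEabs i
      rw [Finset.sum_add_distrib, ← Finset.mul_sum] at sDir
      have hu2 : 0 ≤ bExp p n (fun x => u x ^ 2) := bExp_nonneg h0 h1 n fun x => sq_nonneg _
      have hua : 0 ≤ bExp p n (fun x => |u x|) := bExp_nonneg h0 h1 n fun x => abs_nonneg _
      rw [eVar]
      simp only [Fin.sum_univ_succ, bExp, der_zero_cons, der_succ_cons]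
      have e4 : p * bExp p n (fun x => (v x - w x) ^ 2) +
        (1 - p) * bExp p n (fun x => (v x - w x) ^ 2) = bExp p n (fun x => u x ^ 2) := by
        simp only [hu]; ring
      have e5 : p * bExp p n (fun x => |v x - w x|) +
        (1 - p) * bExp p n (fun x => |v x - w x|) = bExp p n (fun x => |u x|) := by
        simp only [hu]; ring
      have : p * (1 - p) * (2 * bExp p n (fun x => |u x|)) ≤ 2 * bExp p n (fun x => |u x|) := by
        nlinarith
      rw [e4, e5]
      nlinarith

/-! ### A reverse Jensen inequality -/

/-- The one-variable inequality behind the exponent `2 log 2`: it says that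
`log (1 + u) * u ^ (-1 / (2 log 2))` increases on `(0, 1]`, which reduces to
`(1 + u) log (1 + u) ≤ 2 u log 2`, the convexity of `x log x` on `[1, 2]`. -/
lemma log_one_add_le {l t b : ℝ} (hl0 : 0 < l) (hl1 : l ≤ 1)
    (ht : t ≤ l ^ (2 * Real.log 2)) (hb0 : 0 ≤ b) (hb1 : b ≤ 1) (ht0 : 0 ≤ t) :
    Real.log (1 + t * b) ≤ l * Real.log (1 + b) := by
  have hc : 0 < 2 * Real.log 2 := by positivity
  set c := 2 * Real.log 2 with hcdef
  have conv : ∀ u : ℝ, 0 ≤ u → u ≤ 1 → (1 + u) * Real.log (1 + u) ≤ c * u := by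
    intro u h0 h1
    have := Real.convexOn_mul_log.2 (x := 1) (y := 2) (by simp) (by simp)
      (sub_nonneg.2 h1) h0 (by ring)
    simp only [smul_eq_mul, Real.log_one] at this
    have e : (1 - u) * 1 + u * 2 = 1 + u := by ring
    rw [e] at this
    rw [hcdef]; linarith
  have hd : ∀ u : ℝ, 0 < u → HasDerivAt (fun u : ℝ => Real.log (1 + u) * u ^ (-(1 / c)))
      (1 / (1 + u) * u ^ (-(1 / c)) + Real.log (1 + u) * (-(1 / c) * u ^ (-(1 / c) - 1))) u := by
    intro u hu
    have a : HasDerivAt (fun u : ℝ => Real.log (1 + u)) (1 / (1 + u)) u :=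
      ((hasDerivAt_id u).const_add 1).log (by simp only [id]; positivity)
    exact a.mul (Real.hasDerivAt_rpow_const (Or.inl hu.ne'))
  have mono : MonotoneOn (fun u : ℝ => Real.log (1 + u) * u ^ (-(1 / c))) (Set.Ioc 0 1) := by
    refine monotoneOn_of_hasDerivWithinAt_nonneg (convex_Ioc 0 1)
      (fun u hu => (hd u hu.1).continuousAt.continuousWithinAt)
      (fun u hu => (hd u ?_).hasDerivWithinAt) (fun u hu => ?_)
    · rw [interior_Ioc] at hu; exact hu.1
    · rw [interior_Ioc] at hu
      have hu0 := hu.1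
      have e : u ^ (-(1 / c)) = u ^ (-(1 / c) - 1) * u := by
        rw [Real.rpow_sub_one hu0.ne']; field_simp
      have : 1 / (1 + u) * u ^ (-(1 / c)) + Real.log (1 + u) * (-(1 / c) * u ^ (-(1 / c) - 1)) =
          u ^ (-(1 / c) - 1) / (c * (1 + u)) * (c * u - (1 + u) * Real.log (1 + u)) := by
        rw [e]; field_simp; ring
      rw [this]
      have := conv u hu0.le hu.2.le
      exact mul_nonneg (by positivity) (by linarith)
  rcases hb0.eq_or_lt with h | hb
  · simp [← h]
  have hlc : 0 < l ^ c := Real.rpow_pos_of_pos hl0 c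
  have hlc1 : l ^ c ≤ 1 := Real.rpow_le_one hl0.le hl1 hc.le
  have hle : l ^ c * b ≤ b := by nlinarith
  have m := mono (a := l ^ c * b) (b := b) ⟨by positivity, by linarith⟩ ⟨hb, hb1⟩ hle
  have e : (l ^ c * b) ^ (-(1 / c)) = l⁻¹ * b ^ (-(1 / c)) := by
    rw [Real.mul_rpow hlc.le hb.le, ← Real.rpow_mul hl0.le]
    have : c * -(1 / c) = -1 := by field_simp
    rw [this, Real.rpow_neg_one]
  simp only [e] at m
  have hbp : 0 < b ^ (-(1 / c)) := Real.rpow_pos_of_pos hb _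
  rw [← mul_assoc] at m
  have m2 := le_of_mul_le_mul_right m hbp
  have m3 : Real.log (1 + l ^ c * b) ≤ l * Real.log (1 + b) := by
    rwa [← div_eq_mul_inv, div_le_iff₀ hl0, mul_comm _ l] at m2
  refine (Real.log_le_log (by positivity) ?_).trans m3
  nlinarith

/-- Reverse Jensen inequality: if `a` is positive and monotone, and switching on one bit at most
doubles it, then `log E_t a ≤ E_l (log a)` as soon as `t ≤ l ^ (2 log 2)`. -/
lemma log_bExp_le {l t : ℝ} (hl0 : 0 < l) (hl1 : l ≤ 1) (ht0 : 0 ≤ t)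
    (ht : t ≤ l ^ (2 * Real.log 2)) : ∀ (n : ℕ) (a : (Fin n → Bool) → ℝ),
    (∀ x, 0 < a x) → (∀ i x, 0 ≤ der i a x) →
    (∀ i x, a (Function.update x i true) ≤ 2 * a (Function.update x i false)) →
    Real.log (bExp t n a) ≤ bExp l n (fun x => Real.log (a x))
  | 0, a, _, _, _ => le_rfl
  | n + 1, a, hpos, hmono, hdbl => by
      have ht1 : t ≤ 1 := ht.trans (Real.rpow_le_one hl0.le hl1 (by positivity))
      have ih : ∀ b : Bool, Real.log (bExp t n fun x => a (Fin.cons b x)) ≤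
          bExp l n (fun x => Real.log (a (Fin.cons b x))) := by
        intro b
        refine log_bExp_le hl0 hl1 ht0 ht n _ (fun x => hpos _) (fun i x => ?_) (fun i x => ?_)
        · have := hmono i.succ (Fin.cons b x); rwa [der_succ_cons] at this
        · have := hdbl i.succ (Fin.cons b x); simpa only [← Fin.cons_update] using this
      have i1 := mul_le_mul_of_nonneg_left (ih true) hl0.le
      have i0 := mul_le_mul_of_nonneg_left (ih false) (sub_nonneg.2 hl1)
      have hA0 : 0 < bExp t n fun x => a (Fin.cons false x) :=
        bExp_pos ht0 ht1 n fun x => hpos _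
      have h01 : (bExp t n fun x => a (Fin.cons false x)) ≤ bExp t n fun x => a (Fin.cons true x) :=
        bExp_mono ht0 ht1 n fun x => by
          have := hmono 0 (Fin.cons true x); rw [der_zero_cons] at this; linarith
      have h12 : (bExp t n fun x => a (Fin.cons true x)) ≤
          2 * bExp t n fun x => a (Fin.cons false x) := by
        rw [← bExp_smul]
        refine bExp_mono ht0 ht1 n fun x => ?_
        simpa only [Fin.update_cons_zero] using hdbl 0 (Fin.cons true x)
      simp only [bExp]
      set A0 := bExp t n fun x => a (Fin.cons false x)
      set A1 := bExp t n fun x => a (Fin.cons true x)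
      have hb0 : 0 ≤ (A1 - A0) / A0 := div_nonneg (by linarith) hA0.le
      have hb1 : (A1 - A0) / A0 ≤ 1 := by rw [div_le_one hA0]; linarith
      have key := log_one_add_le hl0 hl1 ht hb0 hb1 ht0
      have e1 : t * A1 + (1 - t) * A0 = A0 * (1 + t * ((A1 - A0) / A0)) := by
        field_simp; ring
      have e2 : A1 = A0 * (1 + (A1 - A0) / A0) := by field_simp; ring
      have l2 : Real.log A1 = Real.log A0 + Real.log (1 + (A1 - A0) / A0) := by
        rw [← Real.log_mul hA0.ne' (by positivity), ← e2]
      rw [e1, Real.log_mul hA0.ne' (by positivity)]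
      rw [l2] at i1
      nlinarith

/-! ### Two auxiliary estimates -/

/-- If `h` takes values in `[0, 1]` on `[0, 1]`, obeys the sharp-threshold inequality
`h' ≥ L h (1 - h)` there and has total mass `1 - r`, then its mass `φ l` on `[0, l]` is small for `l`
near `r`. On `[0, l]` one has `h' ≥ L (1 - h l) h`, on `[l, 1]` one has `h' ≥ L (h l) (1 - h)`;
integrate both and add. -/
lemma threshold_mass {φ h h' : ℝ → ℝ} {L r l : ℝ} (hL : 0 < L) (hl0 : 0 ≤ l) (hl1 : l ≤ 1)
    (hφ : ∀ p, HasDerivAt φ (h p) p) (hh : ∀ p, HasDerivAt h (h' p) p)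
    (hb : ∀ p, 0 ≤ p → p ≤ 1 → 0 ≤ h p ∧ h p ≤ 1)
    (hd : ∀ p, 0 ≤ p → p ≤ 1 → L * (h p * (1 - h p)) ≤ h' p)
    (φ0 : φ 0 = 0) (φ1 : φ 1 = 1 - r) : φ l ≤ 1 / L + |l - r| := by
  have hmono : MonotoneOn h (Set.Icc 0 1) := by
    refine monotoneOn_of_hasDerivWithinAt_nonneg (convex_Icc 0 1)
      (fun u hu => (hh u).continuousAt.continuousWithinAt)
      (fun u hu => (hh u).hasDerivWithinAt) (fun u hu => ?_)
    rw [interior_Icc] at hu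
    obtain ⟨a, b⟩ := hb u hu.1.le hu.2.le
    exact le_trans (mul_nonneg hL.le (mul_nonneg a (by linarith))) (hd u hu.1.le hu.2.le)
  obtain ⟨hx0, hx1⟩ := hb l hl0 hl1
  set y := h l
  have m1 : MonotoneOn (fun p => h p - L * (1 - y) * φ p) (Set.Icc 0 l) := by
    refine monotoneOn_of_hasDerivWithinAt_nonneg (convex_Icc 0 l)
      (fun u hu => ((hh u).sub ((hφ u).const_mul _)).continuousAt.continuousWithinAt)
      (fun u hu => ((hh u).sub ((hφ u).const_mul _)).hasDerivWithinAt) (fun u hu => ?_)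
    rw [interior_Icc] at hu
    have h1 : u ≤ 1 := by linarith [hu.2]
    obtain ⟨a, b⟩ := hb u hu.1.le h1
    have c := hd u hu.1.le h1
    have e : h u ≤ y := hmono ⟨hu.1.le, h1⟩ ⟨hl0, hl1⟩ hu.2.le
    nlinarith [mul_nonneg hL.le (mul_nonneg a (sub_nonneg.2 e))]
  have m2 : MonotoneOn (fun p => h p - L * y * (p - φ p)) (Set.Icc l 1) := by
    refine monotoneOn_of_hasDerivWithinAt_nonneg (convex_Icc l 1)
      (fun u hu => ((hh u).sub
        (((hasDerivAt_id u).sub (hφ u)).const_mul _)).continuousAt.continuousWithinAt)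
      (fun u hu => ((hh u).sub
        (((hasDerivAt_id u).sub (hφ u)).const_mul _)).hasDerivWithinAt) (fun u hu => ?_)
    rw [interior_Icc] at hu
    have h0 : 0 ≤ u := by linarith [hu.1]
    obtain ⟨a, b⟩ := hb u h0 hu.2.le
    have c := hd u h0 hu.2.le
    have e : y ≤ h u := hmono ⟨hl0, hl1⟩ ⟨h0, hu.2.le⟩ hu.1.le
    nlinarith [mul_nonneg hL.le (mul_nonneg (sub_nonneg.2 b) (sub_nonneg.2 e))]
  have a1 := m1 (a := 0) (b := l) ⟨le_rfl, hl0⟩ ⟨hl0, le_rfl⟩ hl0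
  have a2 := m2 (a := l) (b := 1) ⟨le_rfl, hl1⟩ ⟨hl1, le_rfl⟩ hl1
  simp only [φ0, φ1] at a1 a2
  have b0 := (hb 0 le_rfl zero_le_one).1
  have b1 := (hb 1 zero_le_one le_rfl).2
  have s : L * φ l ≤ 1 + L * (y * (l - r)) := by
    have : h l = y := rfl
    rw [this] at a1 a2
    nlinarith
  have t : y * (l - r) ≤ |l - r| := by nlinarith [le_abs_self (l - r), abs_nonneg (l - r)]
  have : L * φ l ≤ L * (1 / L + |l - r|) := by
    rw [mul_add, mul_one_div_cancel hL.ne']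
    nlinarith
  exact le_of_mul_le_mul_left this hL

/-- The mode of the binomial distribution with success probability `i / n` is `i`, and hence its
mass there is at least `1 / (n + 1)`. -/
lemma pow_le_choose_mul {n i : ℕ} (hi : i < n) :
    n ^ n ≤ (n + 1) * (n.choose i * i ^ i * (n - i) ^ (n - i)) := by
  obtain ⟨m, rfl⟩ := Nat.exists_eq_add_of_lt hi
  set N := i + m + 1 with hN
  have hNi : N - i = m + 1 := by omega
  rw [hNi]
  set T : ℕ → ℕ := fun j => N.choose j * i ^ j * (m + 1) ^ (N - j) with hT
  have hrec : ∀ j, j < N → T (j + 1) * ((j + 1) * (m + 1)) = T j * ((N - j) * i) := by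
    intro j hj
    have hc := Nat.choose_succ_right_eq N j
    have e : N - j = (N - (j + 1)) + 1 := by omega
    have e' : (m + 1) ^ (N - j) = (m + 1) ^ (N - (j + 1)) * (m + 1) := by rw [← pow_succ, ← e]
    simp only [hT]
    rw [e', pow_succ]
    calc _ = (N.choose (j + 1) * (j + 1)) * (i ^ j * i * (m + 1) ^ (N - (j + 1)) * (m + 1)) := by
          ring
      _ = _ := by rw [hc]; ring
  have hup : ∀ j, j < i → T j ≤ T (j + 1) := by
    intro j hj
    have h1 := hrec j (by omega)
    have h2 : (j + 1) * (m + 1) ≤ (N - j) * i := by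
      rw [mul_comm]; exact Nat.mul_le_mul (by omega) (by omega)
    refine Nat.le_of_mul_le_mul_right (c := (j + 1) * (m + 1)) ?_ (by positivity)
    rw [h1]; exact Nat.mul_le_mul_left _ h2
  have hdown : ∀ j, i ≤ j → j < N → T (j + 1) ≤ T j := by
    intro j hj hjN
    have h1 := hrec j hjN
    have h2 : (N - j) * i ≤ (j + 1) * (m + 1) := by
      rw [mul_comm]; exact Nat.mul_le_mul (by omega) (by omega)
    refine Nat.le_of_mul_le_mul_right (c := (j + 1) * (m + 1)) ?_ (by positivity)
    rw [h1]; exact Nat.mul_le_mul_left _ h2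
  have hle : ∀ j, j ≤ i → T j ≤ T i := by
    intro j hj
    induction hj using Nat.decreasingInduction with
    | self => exact le_rfl
    | of_succ k hk ih => exact (hup k hk).trans ih
  have hge : ∀ j, i ≤ j → j ≤ N → T j ≤ T i := by
    intro j hj
    induction j, hj using Nat.le_induction with
    | base => intro _; exact le_rfl
    | succ k hk ih => intro h; exact (hdown k hk (by omega)).trans (ih (by omega))
  have hall : ∀ j ∈ Finset.range (N + 1), T j ≤ T i := by
    intro j hj
    rw [Finset.mem_range] at hj
    rcases le_total j i with h | h
    · exact hle j h
    · exact hge j h (by omega)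
  have hsum : N ^ N = ∑ j ∈ Finset.range (N + 1), T j := by
    have := add_pow i (m + 1) N
    rw [← add_assoc, ← hN] at this
    rw [this]
    refine Finset.sum_congr rfl fun j _ => ?_
    simp only [hT, Nat.cast_id]; ring
  rw [hsum]
  have := Finset.sum_le_card_nsmul _ _ _ hall
  simpa [hT, hNi] using this

/-! ### The rank function of a code -/

/-- The subcode of `C` of words vanishing on the set with indicator `x`. -/
def Csub {n : ℕ} (C : Submodule (ZMod 2) (Fin n → ZMod 2)) (x : Fin n → Bool) :
    Submodule (ZMod 2) (Fin n → ZMod 2) where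
  carrier := {c | c ∈ C ∧ ∀ j, x j = true → c j = 0}
  zero_mem' := ⟨C.zero_mem, fun _ _ => rfl⟩
  add_mem' := fun {a b} ha hb =>
    ⟨C.add_mem ha.1 hb.1, fun j hj => by simp [ha.2 j hj, hb.2 j hj]⟩
  smul_mem' := fun r a ha => ⟨C.smul_mem r ha.1, fun j hj => by simp [ha.2 j hj]⟩

lemma mem_Csub {n : ℕ} {C : Submodule (ZMod 2) (Fin n → ZMod 2)} {x : Fin n → Bool}
    {c : Fin n → ZMod 2} : c ∈ Csub C x ↔ c ∈ C ∧ ∀ j, x j = true → c j = 0 := Iff.rfl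

/-- `|S| - rank C|_S` for the set `S` with indicator `x`, the rank being computed from the kernel of
the restriction; equivalently, the dimension of the words of the dual code supported in `S`. -/
noncomputable def dC {n : ℕ} (C : Submodule (ZMod 2) (Fin n → ZMod 2)) (x : Fin n → Bool) : ℝ :=
  (∑ j, if x j then (1 : ℝ) else 0) + Module.finrank (ZMod 2) (Csub C x) -
    Module.finrank (ZMod 2) C

lemma Csub_update_true {n : ℕ} (C : Submodule (ZMod 2) (Fin n → ZMod 2)) (x : Fin n → Bool)
    (i : Fin n) (c : Fin n → ZMod 2) :
    c ∈ Csub C (Function.update x i true) ↔ c ∈ Csub C (Function.update x i false) ∧ c i = 0 := by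
  simp only [mem_Csub]
  constructor
  · rintro ⟨h1, h2⟩
    refine ⟨⟨h1, fun j hj => h2 j ?_⟩, h2 i (by simp)⟩
    rcases eq_or_ne j i with h | h
    · subst h; simp
    · simpa [h] using hj
  · rintro ⟨⟨h1, h2⟩, h3⟩
    refine ⟨h1, fun j hj => ?_⟩
    rcases eq_or_ne j i with h | h
    · subst h; exact h3
    · exact h2 j (by simpa [h] using hj)

open scoped Classical in
lemma der_dC {n : ℕ} (C : Submodule (ZMod 2) (Fin n → ZMod 2)) (x : Fin n → Bool) (i : Fin n) :
    der i (dC C) x = if ∀ c ∈ Csub C (Function.update x i false), c i = 0 then 1 else 0 := by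
  have hs : (∑ j, if Function.update x i true j then (1 : ℝ) else 0) -
      (∑ j, if Function.update x i false j then (1 : ℝ) else 0) = 1 := by
    rw [← Finset.sum_sub_distrib, Finset.sum_eq_single i]
    · simp
    · intro j _ hj; simp [hj]
    · simp
  set W := Csub C (Function.update x i false) with hW
  split_ifs with h
  · have e : Csub C (Function.update x i true) = W := by
      ext c
      rw [Csub_update_true]
      exact ⟨fun hc => hc.1, fun hc => ⟨hc, h c hc⟩⟩
    have ef : Module.finrank (ZMod 2) (Csub C (Function.update x i true)) =
        Module.finrank (ZMod 2) W := by rw [e]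
    simp only [der, dC, ef]
    linarith
  · push Not at h
    obtain ⟨c, hc, hci⟩ := h
    let φ : Module.Dual (ZMod 2) W := (LinearMap.proj i).domRestrict W
    have hφ : φ ≠ 0 := fun h0 => hci (by simpa [φ] using LinearMap.congr_fun h0 ⟨c, hc⟩)
    have hk := Module.Dual.finrank_ker_add_one_of_ne_zero hφ
    have e : (LinearMap.ker φ).map W.subtype = Csub C (Function.update x i true) := by
      ext d
      rw [Csub_update_true, Submodule.mem_map]
      constructor
      · rintro ⟨d, hd, rfl⟩
        exact ⟨d.2, by simpa [φ] using hd⟩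
      · rintro ⟨h1, h2⟩
        exact ⟨⟨d, h1⟩, by simpa [φ] using h2, rfl⟩
    have ef : Module.finrank (ZMod 2) (LinearMap.ker φ) =
        Module.finrank (ZMod 2) (Csub C (Function.update x i true)) := by
      rw [← e, Submodule.finrank_map_subtype_eq]
    rw [ef] at hk
    have hk' : (Module.finrank (ZMod 2) (Csub C (Function.update x i true)) : ℝ) + 1 =
        Module.finrank (ZMod 2) W := by exact_mod_cast hk
    simp only [der, dC]
    linarith

lemma der_dC_mem {n : ℕ} (C : Submodule (ZMod 2) (Fin n → ZMod 2)) (x : Fin n → Bool)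
    (i : Fin n) : der i (dC C) x = 0 ∨ der i (dC C) x = 1 := by
  classical
  rw [der_dC]; split_ifs <;> simp

/-- `dC` is supermodular. -/
lemma der_der_dC_mem {n : ℕ} (C : Submodule (ZMod 2) (Fin n → ZMod 2)) (x : Fin n → Bool)
    (i j : Fin n) : der j (der i (dC C)) x = 0 ∨ der j (der i (dC C)) x = 1 := by
  classical
  rw [der]
  have key : der i (dC C) (Function.update x j false) ≤ der i (dC C) (Function.update x j true) := by
    rw [der_dC, der_dC]
    split_ifs with h1 h2 h2
    · exact le_rfl
    · refine absurd (fun c hc => h1 c ?_) h2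
      rcases eq_or_ne i j with h | h
      · subst h; simpa using hc
      · rw [Function.update_comm h.symm] at hc ⊢
        exact ((Csub_update_true C _ j c).1 hc).1
    · exact zero_le_one
    · exact le_rfl
  rcases der_dC_mem C (Function.update x j false) i with a | a <;>
    rcases der_dC_mem C (Function.update x j true) i with b | b <;>
    first | (left; linarith) | (right; linarith)

lemma dC_perm {n : ℕ} {C : Submodule (ZMod 2) (Fin n → ZMod 2)} {π : Equiv.Perm (Fin n)}
    (hπ : PreservesCode C π) (x : Fin n → Bool) : dC C (x ∘ π) = dC C x := by
  have e : (Csub C x).map (LinearEquiv.funCongrLeft (ZMod 2) (ZMod 2) π).toLinearMap =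
      Csub C (x ∘ π) := by
    ext c
    rw [Submodule.mem_map]
    constructor
    · rintro ⟨d, hd, rfl⟩
      exact ⟨(hπ d).1 hd.1, fun j hj => hd.2 _ hj⟩
    · rintro ⟨h1, h2⟩
      refine ⟨c ∘ π.symm, ⟨(hπ _).2 ?_, fun j hj => h2 _ (by simpa using hj)⟩, ?_⟩
      · rwa [Function.comp_assoc, Equiv.symm_comp_self, Function.comp_id]
      · ext j; simp [LinearEquiv.funCongrLeft, LinearMap.funLeft]
  have ef : Module.finrank (ZMod 2) (Csub C (x ∘ π)) = Module.finrank (ZMod 2) (Csub C x) := by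
    rw [← e]; exact LinearEquiv.finrank_map_eq _ _
  simp only [dC, ef, Function.comp_apply]
  rw [Equiv.sum_comp π (fun j => if x j then (1 : ℝ) else 0)]

lemma der_perm {n : ℕ} {f g : (Fin n → Bool) → ℝ} {π : Equiv.Perm (Fin n)}
    (h : ∀ x, f (x ∘ π) = g x) (i : Fin n) (x : Fin n → Bool) :
    der i f (x ∘ π) = der (π i) g x := by
  have e : ∀ b, Function.update (x ∘ π) i b = Function.update x (π i) b ∘ π := by
    intro b; ext j
    rcases eq_or_ne j i with h | h
    · subst h; simp
    · simp [h]
  simp only [der, e, h]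

lemma dC_false {n : ℕ} (C : Submodule (ZMod 2) (Fin n → ZMod 2)) :
    dC C (fun _ => false) = 0 := by
  have : Csub C (fun _ => false) = C := by ext c; simp [mem_Csub]
  have ef : Module.finrank (ZMod 2) (Csub C (fun _ => false)) = Module.finrank (ZMod 2) C := by
    rw [this]
  simp [dC, ef]

lemma dC_true {n : ℕ} (C : Submodule (ZMod 2) (Fin n → ZMod 2)) :
    dC C (fun _ => true) = n - Module.finrank (ZMod 2) C := by
  have : Csub C (fun _ => true) = ⊥ := by
    ext c
    simp only [mem_Csub, forall_const, Submodule.mem_bot]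
    exact ⟨fun h => funext h.2, fun h => by subst h; exact ⟨C.zero_mem, fun _ => rfl⟩⟩
  simp [dC, this]

lemma bExp_zero : ∀ (n : ℕ) (f : (Fin n → Bool) → ℝ), bExp 0 n f = f (fun _ => false)
  | 0, f => congrArg f (Subsingleton.elim _ _)
  | n + 1, f => by
      have : (Fin.cons false (fun _ => false) : Fin (n + 1) → Bool) = fun _ => false := by
        ext j; refine Fin.cases ?_ (fun _ => ?_) j <;> simp
      simp [bExp, bExp_zero n, this]

lemma bExp_one : ∀ (n : ℕ) (f : (Fin n → Bool) → ℝ), bExp 1 n f = f (fun _ => true)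
  | 0, f => congrArg f (Subsingleton.elim _ _)
  | n + 1, f => by
      have : (Fin.cons true (fun _ => true) : Fin (n + 1) → Bool) = fun _ => true := by
        ext j; refine Fin.cases ?_ (fun _ => ?_) j <;> simp
      simp [bExp, bExp_one n, this]

/-! ### Weight distribution and the rank function -/

lemma two_rpow_dC {n : ℕ} (C : Submodule (ZMod 2) (Fin n → ZMod 2)) (x : Fin n → Bool) :
    (Nat.card C : ℝ) * (2 : ℝ) ^ dC C x =
      (∏ j, if x j then (2 : ℝ) else 1) * (Nat.card (Csub C x) : ℝ) := by
  have hcard : ∀ W : Submodule (ZMod 2) (Fin n → ZMod 2),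
      (Nat.card W : ℝ) = (2 : ℝ) ^ (Module.finrank (ZMod 2) W : ℝ) := by
    intro W
    rw [Module.natCard_eq_pow_finrank (K := ZMod 2) (V := W), Real.rpow_natCast]
    simp
  have hprod : (∏ j, if x j then (2 : ℝ) else 1) =
      (2 : ℝ) ^ (∑ j, if x j then (1 : ℝ) else 0) := by
    rw [Real.rpow_sum_of_pos two_pos]
    refine Finset.prod_congr rfl fun j _ => ?_
    split_ifs <;> simp
  rw [hcard, hcard, hprod, ← Real.rpow_add two_pos, ← Real.rpow_add two_pos, dC]
  congr 1; ring

open scoped Classical in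
/-- A form of the MacWilliams identity. A word `c` contributes
`∏ j, (1 ± t) = E_t [2 ^ |S| * 1(c vanishes on S)]`, and summing over `C` turns the right-hand side
into `E_t [2 ^ |S| * |Csub C S|]`. -/
lemma macWilliams {n : ℕ} (C : Submodule (ZMod 2) (Fin n → ZMod 2)) (t : ℝ) :
    ∑ c : Fin n → ZMod 2 with c ∈ C, (1 - t) ^ hammingNorm c * (1 + t) ^ (n - hammingNorm c) =
      (Nat.card C : ℝ) * bExp t n (fun x => (2 : ℝ) ^ dC C x) := by
  rw [← bExp_smul]
  simp only [two_rpow_dC]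
  have hin : ∀ x : Fin n → Bool, (∏ j, if x j then (2 : ℝ) else 1) * (Nat.card (Csub C x) : ℝ) =
      ∑ c : Fin n → ZMod 2 with c ∈ C,
        ∏ j, (if x j = true then (if c j = 0 then (2 : ℝ) else 0) else 1) := by
    intro x
    have e : ∀ c ∈ (Finset.univ.filter (fun c : Fin n → ZMod 2 => c ∈ C)),
        (∏ j, (if x j = true then (if c j = 0 then (2 : ℝ) else 0) else 1)) =
        if c ∈ Csub C x then (∏ j, if x j then (2 : ℝ) else 1) else 0 := by
      intro c hc
      have hcC : c ∈ C := by simpa using hc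
      split_ifs with h
      · refine Finset.prod_congr rfl fun j _ => ?_
        split_ifs with h1 h2
        · rfl
        · exact absurd (h.2 j h1) h2
        · rfl
      · have : ∃ j, x j = true ∧ c j ≠ 0 := by
          by_contra hcon
          push Not at hcon
          exact h ⟨hcC, hcon⟩
        obtain ⟨j, h1, h2⟩ := this
        exact Finset.prod_eq_zero (Finset.mem_univ j) (by simp [h1, h2])
    rw [Finset.sum_congr rfl e, ← Finset.sum_filter, Finset.sum_const, nsmul_eq_mul, mul_comm]
    congr 2
    rw [Finset.filter_filter, Nat.card_eq_fintype_card, Fintype.card_subtype]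
    congr 1; ext c
    simp only [Finset.mem_filter, Finset.mem_univ, true_and]
    exact ⟨fun h => ⟨h.1, h⟩, fun h => h.2⟩
  simp only [hin]
  rw [bExp_sum]
  refine Finset.sum_congr rfl fun c _ => ?_
  rw [bExp_prod t n (fun j b => if b = true then (if c j = 0 then (2 : ℝ) else 0) else 1)]
  have e : ∀ j, (t * (if true = true then (if c j = 0 then (2 : ℝ) else 0) else 1) +
      (1 - t) * (if false = true then (if c j = 0 then (2 : ℝ) else 0) else 1)) =
      if c j ≠ 0 then 1 - t else 1 + t := by
    intro j
    by_cases h : c j = 0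
    · simp [h]; ring
    · simp [h]
  rw [Finset.prod_congr rfl fun j _ => e j, Finset.prod_ite, Finset.prod_const, Finset.prod_const, hammingNorm]
  congr 2
  have := Finset.card_filter_add_card_filter_not (s := (Finset.univ : Finset (Fin n)))
    (fun j => c j ≠ 0)
  rw [Finset.card_univ, Fintype.card_fin] at this
  omega

lemma weightEnum_mul_le {n : ℕ} (C : Submodule (ZMod 2) (Fin n → ZMod 2)) {t : ℝ}
    (h0 : 0 ≤ t) (h1 : t ≤ 1) (i : ℕ) :
    (weightEnum C i : ℝ) * ((1 - t) ^ i * (1 + t) ^ (n - i)) ≤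
      (Nat.card C : ℝ) * bExp t n (fun x => (2 : ℝ) ^ dC C x) := by
  classical
  rw [← macWilliams]
  have e : weightEnum C i =
      (Finset.univ.filter (fun c : Fin n → ZMod 2 => c ∈ C ∧ hammingNorm c = i)).card := by
    rw [weightEnum, Nat.card_eq_fintype_card, Fintype.card_subtype]
  have q : 0 ≤ 1 - t := by linarith
  rw [e, ← nsmul_eq_mul, ← Finset.sum_const]
  rw [← Finset.filter_filter]
  refine le_trans (Finset.sum_le_sum fun c hc => ?_) (Finset.sum_le_sum_of_subset_of_nonneg
    (f := fun c : Fin n → ZMod 2 => (1 - t) ^ hammingNorm c * (1 + t) ^ (n - hammingNorm c))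
    (Finset.filter_subset (fun c => hammingNorm c = i) _) fun c _ _ => by positivity)
  rw [(Finset.mem_filter.1 hc).2]

/-- The expectation of `dC` at density `l` is at most `n` times the distance from `l` to the rate,
up to `O(n / log n)`. The derivative of `E_p dC / n` is the probability `h p = E_p (der i (dC C))`,
independent of `i` by transitivity; its own derivative is a sum of `n - 1` influences, equal by double
transitivity, so either they exceed `1 / √(n - 1)` or `kkl` applies. In both cases
`h' ≥ L h (1 - h)` with `L = log (n - 1) / 8`. -/
lemma bExp_dC_le {n : ℕ} (hn : 3 ≤ n) (C : Submodule (ZMod 2) (Fin n → ZMod 2))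
    (hC : DoublyTransitive C) {l : ℝ} (hl0 : 0 ≤ l) (hl1 : l ≤ 1) :
    bExp l n (dC C) ≤ n * (1 / (Real.log (n - 1) / 8) + |l - codeRate C|) := by
  have hn0 : (0 : ℝ) < n := by positivity
  let i0 : Fin n := ⟨0, by omega⟩
  let j0 : Fin n := ⟨1, by omega⟩
  have hij : i0 ≠ j0 := by simp [i0, j0]
  set m : ℝ := (n : ℝ) - 1 with hm
  have hm2 : 2 ≤ m := by
    have : (3 : ℝ) ≤ n := by exact_mod_cast hn
    rw [hm]; linarith
  have hm0 : 0 < m := by linarith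
  set L := Real.log m / 8 with hL
  have hLpos : 0 < L := div_pos (Real.log_pos (by linarith)) (by norm_num)
  set f := der i0 (dC C) with hf
  -- by symmetry, all first derivatives have the same expectation
  have h1sym : ∀ p i, bExp p n (der i (dC C)) = bExp p n f := by
    intro p i
    obtain ⟨j, hj⟩ : ∃ j : Fin n, i ≠ j := by
      by_cases h : i = i0
      · exact ⟨j0, h ▸ hij⟩
      · exact ⟨i0, h⟩
    obtain ⟨π, hπ, h1, -⟩ := hC i j i0 j0 hj hij
    rw [← bExp_perm p n (der i (dC C)) π]
    congr 1; funext x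
    rw [der_perm (dC_perm hπ), h1]
  have h2sym : ∀ p j, j ≠ i0 → bExp p n (der j f) = bExp p n (der j0 f) := by
    intro p j hj
    obtain ⟨π, hπ, h1, h2⟩ := hC i0 j i0 j0 hj.symm hij
    rw [← bExp_perm p n (der j f) π]
    congr 1; funext x
    rw [der_perm (g := f) (fun y => by rw [hf, der_perm (dC_perm hπ), h1]), h2]
  have hder0 : ∀ p, bExp p n (der i0 f) = 0 := by
    intro p
    have : der i0 f = fun _ => 0 := by
      funext x; simp [hf, der]
    rw [this, bExp_const]
  have hsum : ∀ p, ∑ j, bExp p n (der j f) = m * bExp p n (der j0 f) := by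
    intro p
    rw [← Finset.add_sum_erase _ _ (Finset.mem_univ i0), hder0, zero_add,
      Finset.sum_congr rfl fun j hj => h2sym p j (Finset.ne_of_mem_erase hj), Finset.sum_const,
      Finset.card_erase_of_mem (Finset.mem_univ _), Finset.card_univ, Fintype.card_fin,
      nsmul_eq_mul, Nat.cast_sub (by omega), Nat.cast_one]
  have hf01 : ∀ x, f x = 0 ∨ f x = 1 := fun x => der_dC_mem C x i0
  have hd01 : ∀ j x, der j f x = 0 ∨ der j f x = 1 := fun j x => der_der_dC_mem C x i0 j
  have habs : ∀ j, (fun x => |der j f x|) = der j f := by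
    intro j; funext x; rcases hd01 j x with h | h <;> simp [h]
  have hsq : ∀ j, (fun x => der j f x ^ 2) = der j f := by
    intro j; funext x; rcases hd01 j x with h | h <;> simp [h]
  have hfsq : (fun x => f x ^ 2) = f := by
    funext x; rcases hf01 x with h | h <;> simp [h]
  have hb : ∀ p, 0 ≤ p → p ≤ 1 → 0 ≤ bExp p n f ∧ bExp p n f ≤ 1 := by
    intro p h0 h1
    refine ⟨bExp_nonneg h0 h1 n fun x => by rcases hf01 x with h | h <;> simp [h], ?_⟩
    have := bExp_mono h0 h1 n (f := f) (g := fun _ => 1)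
      fun x => by rcases hf01 x with h | h <;> simp [h]
    rwa [bExp_const] at this
  have hthr : ∀ p, 0 ≤ p → p ≤ 1 →
      L * (bExp p n f * (1 - bExp p n f)) ≤ ∑ j, bExp p n (der j f) := by
    intro p h0 h1
    obtain ⟨b0, b1⟩ := hb p h0 h1
    have hI0 : 0 ≤ bExp p n (der j0 f) :=
      bExp_nonneg h0 h1 n fun x => by rcases hd01 j0 x with h | h <;> simp [h]
    have hs0 : 0 < √m := Real.sqrt_pos.2 hm0
    have hs1 : 1 ≤ √m := Real.one_le_sqrt.2 (by linarith)
    have hss : √m * √m = m := Real.mul_self_sqrt hm0.le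
    have hlog : Real.log m = 2 * Real.log √m := by rw [Real.log_sqrt hm0.le]; ring
    rcases le_or_gt (bExp p n (der j0 f)) (1 / √m) with h | h
    · -- small influences: the total influence is large by `kkl`
      have k := kkl h0 h1 (I := 1 / √m) (by positivity) (by rw [div_le_one hs0]; exact hs1) n f
        (fun i x => by rcases hd01 i x with h | h <;> simp [h])
        (fun j => by
          rw [habs]
          by_cases hj : j = i0
          · rw [hj, hder0]; positivity
          · rw [h2sym p j hj]; exact h)
      simp only [habs, hsq, hfsq, one_div_one_div] at k
      rw [hL, hlog]
      nlinarith
    · -- large influences: the total influence exceeds `√m`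
      rw [hsum]
      have h2 : √m ≤ m * bExp p n (der j0 f) := by
        rw [div_lt_iff₀ hs0] at h
        nlinarith
      have h3 : L ≤ √m := by
        have := Real.log_le_sub_one_of_pos hs0
        rw [hL, hlog]; linarith
      have h4 : bExp p n f * (1 - bExp p n f) ≤ 1 := by nlinarith
      nlinarith
  have main := threshold_mass (φ := fun p => bExp p n (dC C) / n) (h := fun p => bExp p n f)
    (h' := fun p => ∑ j, bExp p n (der j f)) (r := codeRate C) hLpos hl0 hl1
    (fun p => by
      have := (bExp_hasDerivAt p n (dC C)).div_const (n : ℝ)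
      refine this.congr_deriv ?_
      rw [Finset.sum_congr rfl fun i _ => h1sym p i, Finset.sum_const, Finset.card_univ,
        Fintype.card_fin, nsmul_eq_mul]
      field_simp)
    (fun p => bExp_hasDerivAt p n f) hb hthr
    (by simp [bExp_zero, dC_false])
    (by simp only [bExp_one, dC_true, codeRate, Fintype.card_fin]; field_simp)
  rw [div_le_iff₀ hn0] at main
  linarith

/-- The weight bound with an explicit error term, in terms of a free parameter `t`. -/
lemma weightEnum_mul_le' {n : ℕ} (hn : 3 ≤ n) (C : Submodule (ZMod 2) (Fin n → ZMod 2))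
    (hC : DoublyTransitive C) {l t : ℝ} (hl0 : 0 < l) (hl1 : l ≤ 1) (ht0 : 0 ≤ t)
    (ht : t ≤ l ^ (2 * Real.log 2)) (i : ℕ) :
    (weightEnum C i : ℝ) * ((1 - t) ^ i * (1 + t) ^ (n - i)) ≤ (Nat.card C : ℝ) *
      (2 : ℝ) ^ (n * (1 / (Real.log (n - 1) / 8) + |l - codeRate C|)) := by
  have ht1 : t ≤ 1 := ht.trans (Real.rpow_le_one hl0.le hl1 (by positivity))
  refine (weightEnum_mul_le C ht0 ht1 i).trans (mul_le_mul_of_nonneg_left ?_ (by positivity))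
  have hpos : ∀ x, 0 < (2 : ℝ) ^ dC C x := fun x => by positivity
  have k := log_bExp_le hl0 hl1 ht0 ht n (fun x => (2 : ℝ) ^ dC C x) hpos
    (fun i x => by
      have := der_dC_mem C x i
      simp only [der] at this ⊢
      refine sub_nonneg.2 (Real.rpow_le_rpow_of_exponent_le one_le_two ?_)
      rcases this with h | h <;> linarith)
    (fun i x => by
      have := der_dC_mem C x i
      simp only [der] at this
      rw [mul_comm, ← Real.rpow_add_one two_ne_zero]
      refine Real.rpow_le_rpow_of_exponent_le one_le_two ?_
      rcases this with h | h <;> linarith)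
  simp only [Real.log_rpow two_pos] at k
  have e : (fun x => dC C x * Real.log 2) = fun x => Real.log 2 * dC C x := by
    funext x; ring
  rw [e, bExp_smul] at k
  have hl2 : 0 < Real.log 2 := Real.log_pos one_lt_two
  have k2 := k.trans (mul_le_mul_of_nonneg_left (bExp_dC_le hn C hC hl0.le hl1) hl2.le)
  rw [Real.rpow_def_of_pos two_pos]
  exact (Real.log_le_iff_le_exp (bExp_pos ht0 ht1 n hpos)).1 k2

/-! ### Adjoining the all-ones word -/

/-- The code generated by `C` and the all-ones word. Its weight distribution is symmetric. -/
def addOnes {n : ℕ} (C : Submodule (ZMod 2) (Fin n → ZMod 2)) :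
    Submodule (ZMod 2) (Fin n → ZMod 2) :=
  C ⊔ Submodule.span (ZMod 2) {1}

lemma addOnes_doublyTransitive {n : ℕ} {C : Submodule (ZMod 2) (Fin n → ZMod 2)}
    (hC : DoublyTransitive C) : DoublyTransitive (addOnes C) := by
  intro i₁ j₁ i₂ j₂ h₁ h₂
  obtain ⟨π, hπ, h⟩ := hC i₁ j₁ i₂ j₂ h₁ h₂
  refine ⟨π, fun x => ?_, h⟩
  simp only [addOnes, Submodule.mem_sup, Submodule.mem_span_singleton]
  constructor
  · rintro ⟨y, hy, _, ⟨a, rfl⟩, rfl⟩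
    exact ⟨y ∘ π, (hπ y).1 hy, _, ⟨a, rfl⟩, rfl⟩
  · rintro ⟨y, hy, _, ⟨a, rfl⟩, e⟩
    refine ⟨y ∘ π.symm, (hπ _).2 ?_, _, ⟨a, rfl⟩, ?_⟩
    · rwa [Function.comp_assoc, Equiv.symm_comp_self, Function.comp_id]
    · ext j
      have := congrFun e (π.symm j)
      simpa using this

lemma finrank_addOnes_le {n : ℕ} (C : Submodule (ZMod 2) (Fin n → ZMod 2)) :
    Module.finrank (ZMod 2) (addOnes C) ≤ Module.finrank (ZMod 2) C + 1 :=
  (Submodule.finrank_add_le_finrank_add_finrank _ _).trans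
    (Nat.add_le_add_left
      (by simpa using finrank_span_le_card (R := ZMod 2) {(1 : Fin n → ZMod 2)}) _)

lemma card_addOnes_le {n : ℕ} (C : Submodule (ZMod 2) (Fin n → ZMod 2)) :
    (Nat.card (addOnes C) : ℝ) ≤ 2 * Nat.card C := by
  rw [Module.natCard_eq_pow_finrank (K := ZMod 2) (V := C),
    Module.natCard_eq_pow_finrank (K := ZMod 2) (V := addOnes C)]
  have := Nat.pow_le_pow_right (n := 2) two_pos (finrank_addOnes_le C)
  rw [pow_succ, mul_comm] at this
  simp only [Nat.card_eq_fintype_card, ZMod.card]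
  exact_mod_cast this

lemma abs_codeRate_addOnes_sub_le {n : ℕ} (hn : 0 < n)
    (C : Submodule (ZMod 2) (Fin n → ZMod 2)) :
    |codeRate (addOnes C) - codeRate C| ≤ 1 / n := by
  have h1 : Module.finrank (ZMod 2) C ≤ Module.finrank (ZMod 2) (addOnes C) :=
    Submodule.finrank_mono le_sup_left
  have h2 := finrank_addOnes_le C
  have h1' : (Module.finrank (ZMod 2) C : ℝ) ≤ Module.finrank (ZMod 2) (addOnes C) := by
    exact_mod_cast h1
  have h2' : (Module.finrank (ZMod 2) (addOnes C) : ℝ) ≤ Module.finrank (ZMod 2) C + 1 := by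
    exact_mod_cast h2
  have hn' : (0 : ℝ) < n := by exact_mod_cast hn
  rw [codeRate, codeRate, ← sub_div, Fintype.card_fin, abs_div, abs_of_pos hn']
  refine div_le_div_of_nonneg_right ?_ hn'.le
  rw [abs_le]; constructor <;> linarith

/-- Complementing words maps `addOnes C` to itself and exchanges the weights `i` and `n - i`. -/
lemma weightEnum_le_addOnes {n : ℕ} (C : Submodule (ZMod 2) (Fin n → ZMod 2)) {i : ℕ}
    (hi : i ≤ n) : weightEnum C i ≤ weightEnum (addOnes C) (min i (n - i)) := by
  have hle : ∀ c ∈ C, c ∈ addOnes C := fun c hc => Submodule.mem_sup_left hc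
  have h1 : (1 : Fin n → ZMod 2) ∈ addOnes C :=
    Submodule.mem_sup_right (Submodule.mem_span_singleton_self _)
  rcases min_choice i (n - i) with h | h <;> rw [h]
  · exact Nat.card_le_card_of_injective
      (fun c => ⟨c.1, hle _ c.2.1, c.2.2⟩) (fun a b hab => Subtype.ext (by simpa using hab))
  · have hw : ∀ c : Fin n → ZMod 2, hammingNorm c = i → hammingNorm (c + 1) = n - i := by
      intro c hc
      have hz : ∀ a : ZMod 2, a + 1 ≠ 0 ↔ ¬ a ≠ 0 := by decide
      have := Finset.card_filter_add_card_filter_not (s := (Finset.univ : Finset (Fin n)))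
        (fun j => c j ≠ 0)
      rw [Finset.card_univ, Fintype.card_fin] at this
      simp only [hammingNorm, Pi.add_apply, Pi.one_apply, hz] at hc ⊢
      omega
    exact Nat.card_le_card_of_injective
      (fun c => ⟨c.1 + 1, (addOnes C).add_mem (hle _ c.2.1) h1, hw _ c.2.2⟩)
      (fun a b hab => Subtype.ext (by simpa using hab))

/-! ### The asymptotic statement -/

lemma eventually_error_le (R : ℝ) (n : ℕ → ℕ) (hn : StrictMono n)
    (C : ∀ k, Submodule (ZMod 2) (Fin (n k) → ZMod 2))
    (hrate : Filter.Tendsto (fun k => codeRate (C k)) Filter.atTop (nhds R))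
    {ε : ℝ} (hε : 0 < ε) :
    ∀ᶠ k in atTop, 3 ≤ n k ∧
      1 / (Real.log ((n k : ℝ) - 1) / 8) + |R - codeRate (addOnes (C k))| ≤ ε / 2 ∧
      2 * ((n k : ℝ) + 1) ≤ 2 ^ (ε / 2 * (n k : ℝ)) := by
  have hnt : Tendsto n atTop atTop := hn.tendsto_atTop
  have hnr : Tendsto (fun k => (n k : ℝ)) atTop atTop := tendsto_natCast_atTop_atTop.comp hnt
  have t1 : Tendsto (fun k => 1 / (Real.log ((n k : ℝ) - 1) / 8)) atTop (nhds 0) := by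
    simp only [one_div]
    exact tendsto_inv_atTop_zero.comp ((Real.tendsto_log_atTop.comp
      (tendsto_atTop_add_const_right _ (-1) hnr)).atTop_div_const (by norm_num))
  have t2 : Tendsto (fun k => |R - codeRate (C k)|) atTop (nhds 0) := by
    simpa using (hrate.const_sub R).abs
  have t3 : Tendsto (fun k => 1 / (n k : ℝ)) atTop (nhds 0) := by
    simp only [one_div]; exact tendsto_inv_atTop_zero.comp hnr
  have t := (t1.add t2).add t3
  simp only [add_zero] at t
  have hexp : ∀ᶠ y : ℝ in atTop, 2 * (y + 1) ≤ 2 ^ (ε / 2 * y) := by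
    have hb : 0 < Real.log 2 * (ε / 2) := by positivity
    have h := (isLittleO_pow_exp_pos_mul_atTop 1 hb).bound (show (0 : ℝ) < 1 / 4 by norm_num)
    filter_upwards [h, eventually_ge_atTop 1] with y hy hy1
    rw [Real.rpow_def_of_pos two_pos, ← mul_assoc]
    rw [Real.norm_of_nonneg (by positivity), Real.norm_of_nonneg (by positivity), pow_one] at hy
    linarith
  filter_upwards [hnt.eventually_ge_atTop 3, t.eventually (gt_mem_nhds (half_pos hε)),
    hnr.eventually hexp] with k h3 h4 h5
  refine ⟨h3, ?_, h5⟩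
  have a := abs_codeRate_addOnes_sub_le (by omega) (C k)
  have b : |R - codeRate (addOnes (C k))| ≤ |R - codeRate (C k)| +
      |codeRate (addOnes (C k)) - codeRate (C k)| := by
    rw [abs_sub_comm (codeRate (addOnes (C k)))]; exact abs_sub_le _ _ _
  linarith

/-- refined weight distribution bound for doubly transitive codes. -/
theorem weight_bound_doubly_transitive_refined (R : ℝ) (hR0 : 0 < R) (hR1 : R < 1)
    (θ : ℝ) (hθ : θ = R ^ (2 * Real.log 2))
    (n : ℕ → ℕ) (hn : StrictMono n) (hpos : ∀ k, 0 < n k)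
    (C : ∀ k, Submodule (ZMod 2) (Fin (n k) → ZMod 2))
    (hdt : ∀ k, DoublyTransitive (C k))
    (hrate : Filter.Tendsto (fun k => codeRate (C k)) Filter.atTop (nhds R)) :
    ∀ ε > (0 : ℝ), ∃ N : ℕ, ∀ k, N ≤ n k → ∀ i ≤ n k,
      (((min i (n k - i) : ℕ) : ℝ) ≤ (1 - θ) * (n k : ℝ) / 2 →
        (weightEnum (C k) i : ℝ) ≤
          (2 : ℝ) ^ (ε * (n k : ℝ)) * (Nat.card ↥(C k) : ℝ) /
            ((1 - θ) ^ (min i (n k - i)) * (1 + θ) ^ (n k - min i (n k - i)))) ∧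
      ((1 - θ) * (n k : ℝ) / 2 < ((min i (n k - i) : ℕ) : ℝ) →
        (weightEnum (C k) i : ℝ) ≤
          (2 : ℝ) ^ (ε * (n k : ℝ)) * ((n k).choose (min i (n k - i)) : ℝ) *
            (Nat.card ↥(C k) : ℝ) / 2 ^ (n k)) := by
  intro ε hε
  obtain ⟨K, hK⟩ := eventually_atTop.1 (eventually_error_le R n hn C hrate hε)
  refine ⟨n K, fun k hk i hi => ?_⟩
  obtain ⟨h3, herr, hpoly⟩ := hK k (hn.le_iff_le.1 hk)
  have hn0 : (0 : ℝ) < n k := by exact_mod_cast hpos k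
  have hθ0 : 0 < θ := by rw [hθ]; exact Real.rpow_pos_of_pos hR0 _
  have hθ1 : θ < 1 := by rw [hθ]; exact Real.rpow_lt_one hR0.le hR1 (by positivity)
  have hin : min i (n k - i) ≤ n k := by omega
  have h2in : 2 * min i (n k - i) ≤ n k := by omega
  have hw := weightEnum_le_addOnes (C k) hi
  set s := min i (n k - i) with hs
  set E := (2 : ℝ) ^ (ε / 2 * (n k : ℝ)) with hE
  have hE0 : 0 < E := by positivity
  have hEE : (2 : ℝ) ^ (ε * (n k : ℝ)) = E * E := by
    rw [hE, ← Real.rpow_add two_pos]; congr 1; ring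
  have hcard : (0 : ℝ) ≤ Nat.card (C k) := by positivity
  have key : ∀ t, 0 ≤ t → t ≤ θ →
      (weightEnum (C k) i : ℝ) * ((1 - t) ^ s * (1 + t) ^ (n k - s)) ≤
        2 * (Nat.card (C k) : ℝ) * E := by
    intro t ht0 ht1
    have h1t : 0 ≤ 1 - t := by linarith
    have a := weightEnum_mul_le' h3 (addOnes (C k)) (addOnes_doublyTransitive (hdt k)) hR0 hR1.le
      ht0 (hθ ▸ ht1) s
    have b : (weightEnum (C k) i : ℝ) * ((1 - t) ^ s * (1 + t) ^ (n k - s)) ≤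
        (weightEnum (addOnes (C k)) s : ℝ) * ((1 - t) ^ s * (1 + t) ^ (n k - s)) :=
      mul_le_mul_of_nonneg_right (by exact_mod_cast hw) (by positivity)
    refine (b.trans a).trans (mul_le_mul (card_addOnes_le _) ?_ (by positivity) (by positivity))
    refine Real.rpow_le_rpow_of_exponent_le one_le_two ?_
    rw [mul_comm]
    exact mul_le_mul_of_nonneg_right herr hn0.le
  constructor
  · intro _
    have h1θ : 0 < 1 - θ := by linarith
    rw [le_div_iff₀ (by positivity), hEE]
    refine (key θ hθ0.le le_rfl).trans ?_
    have : 2 ≤ E := by linarith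
    nlinarith [mul_le_mul_of_nonneg_right this (mul_nonneg hcard hE0.le)]
  · intro hlt
    -- the optimal parameter `t = 1 - 2 s / n` lies in `[0, θ]`
    have hsR : 2 * (s : ℝ) ≤ n k := by exact_mod_cast h2in
    have hs0 : 0 < s := by
      have : (0 : ℝ) < s := lt_of_le_of_lt (by
        have : 0 ≤ 1 - θ := by linarith
        positivity) hlt
      exact_mod_cast this
    have hsn : s < n k := by omega
    have a := key (1 - 2 * s / n k) (by rw [sub_nonneg, div_le_one hn0]; exact hsR) (by
      have : 1 - θ ≤ 2 * s / n k := by rw [le_div_iff₀ hn0]; linarith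
      linarith)
    have e1 : 1 - (1 - 2 * (s : ℝ) / n k) = 2 * (s / n k) := by ring
    have e2 : 1 + (1 - 2 * (s : ℝ) / n k) = 2 * (((n k - s : ℕ) : ℝ) / n k) := by
      rw [Nat.cast_sub hin]; field_simp; ring
    have e3 : (1 - (1 - 2 * (s : ℝ) / n k)) ^ s * (1 + (1 - 2 * (s : ℝ) / n k)) ^ (n k - s) =
        2 ^ (n k) * ((s : ℝ) ^ s * ((n k - s : ℕ) : ℝ) ^ (n k - s)) / (n k : ℝ) ^ (n k) := by
      have p2 : (2 : ℝ) ^ (n k) = 2 ^ s * 2 ^ (n k - s) := by rw [← pow_add]; congr 1; omega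
      have pn : (n k : ℝ) ^ (n k) = (n k : ℝ) ^ s * (n k : ℝ) ^ (n k - s) := by
        rw [← pow_add]; congr 1; omega
      rw [e1, e2, mul_pow, mul_pow, div_pow, div_pow, p2, pn]
      field_simp
    rw [e3] at a
    have hbin : (n k : ℝ) ^ (n k) ≤ ((n k : ℝ) + 1) * (((n k).choose s : ℝ) * (s : ℝ) ^ s *
        ((n k - s : ℕ) : ℝ) ^ (n k - s)) := by
      exact_mod_cast pow_le_choose_mul hsn
    set w := (weightEnum (C k) i : ℝ)
    set P := (s : ℝ) ^ s * ((n k - s : ℕ) : ℝ) ^ (n k - s) with hP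
    have hP0 : 0 < P := by
      have : (0 : ℝ) < s := by exact_mod_cast hs0
      have : (0 : ℝ) < ((n k - s : ℕ) : ℝ) := by exact_mod_cast (by omega : 0 < n k - s)
      positivity
    rw [← mul_div_assoc, div_le_iff₀ (by positivity)] at a
    rw [le_div_iff₀ (by positivity), hEE]
    refine le_of_mul_le_mul_right ?_ hP0
    calc w * 2 ^ (n k) * P = w * (2 ^ (n k) * P) := by ring
      _ ≤ 2 * (Nat.card (C k) : ℝ) * E * (n k : ℝ) ^ (n k) := a
      _ ≤ 2 * (Nat.card (C k) : ℝ) * E * (((n k : ℝ) + 1) * (((n k).choose s : ℝ) * (s : ℝ) ^ s *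
        ((n k - s : ℕ) : ℝ) ^ (n k - s))) := mul_le_mul_of_nonneg_left hbin (by positivity)
      _ = (2 * ((n k : ℝ) + 1)) * (E * ((n k).choose s : ℝ) * (Nat.card (C k) : ℝ) * P) := by
        rw [hP]; ring
      _ ≤ E * (E * ((n k).choose s : ℝ) * (Nat.card (C k) : ℝ) * P) :=
        mul_le_mul_of_nonneg_right hpoly (by positivity)
      _ = E * E * ((n k).choose s : ℝ) * (Nat.card (C k) : ℝ) * P := by ring
end
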